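/- Let μ > 0 and let γ₁ be a closed regular curve in S² with min κ₁ > μ whose restriction to [a₁,b₁] is a negative shell with image Σ₁. Let C be a μ-circle such that Σ₁ lies in the closure of the interior domain of C and C ∩ Σ₁ = {P, Q} with P = γ₁(d₁), Q = γ₁(c₁), where a₁ < c₁ < d₁ < b₁. For t ∈ [d₁,b₁] let Ĉ_t be the tangent μ-circle to γ₁ at γ₁(t) on the normal side. Suppose X = γ₁(x) ∈ Ĉ_t for some x ∈ [d₁,b₁] with x ≠ t. If t < x ≤ b₁ (resp. d₁ ≤ x < t), then the subarc of Ĉ_t starting at γ₁(t) in the direction of γ₁'(t) and ending at X (resp. starting at X and ending at γ₁(t), traversed in the same rotational direction) meets the circle C in exactly two points. -/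

import Mathlib

noncomputable section

open Matrix

/-- Euclidean 3-space (as triples of reals). -/
abbrev R3 : Type := Fin 3 → ℝ

/-- The Euclidean inner product on ℝ³. -/
def dot3 (a b : R3) : ℝ := a 0 * b 0 + a 1 * b 1 + a 2 * b 2

/-- The Euclidean norm on ℝ³. -/
def norm3 (a : R3) : ℝ := Real.sqrt (dot3 a a)

/-- The cross product on ℝ³. -/
def cross3 (a b : R3) : R3 :=
  ![a 1 * b 2 - a 2 * b 1, a 2 * b 0 - a 0 * b 2, a 0 * b 1 - a 1 * b 0]

/-- The determinant of three vectors in ℝ³. -/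
def det3 (a b c : R3) : ℝ := dot3 a (cross3 b c)

/-- `γ : ℝ → ℝ³` is a regular curve in the unit sphere S²:
it is smooth, takes values in S², and has nowhere-vanishing derivative. -/
structure IsRegularCurve (γ : ℝ → R3) : Prop where
  smooth : ContDiff ℝ (⊤ : ℕ∞) γ
  sphere : ∀ s, dot3 (γ s) (γ s) = 1
  reg : ∀ s, deriv γ s ≠ 0

/-- The geodesic curvature `κ(s) = det(γ, γ', γ'')/|γ'|³` of a curve in S². -/
def kappa (γ : ℝ → R3) (s : ℝ) : ℝ :=
  det3 (γ s) (deriv γ s) (deriv (deriv γ) s) / norm3 (deriv γ s) ^ 3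

/-- The unit normal `n(s) = (γ × γ')/|γ'|` of a curve in S². -/
def unitNormal (γ : ℝ → R3) (s : ℝ) : R3 :=
  (norm3 (deriv γ s))⁻¹ • cross3 (γ s) (deriv γ s)

/-- `γ` is closed of period `l > 0`. -/
def HasPeriod (γ : ℝ → R3) (l : ℝ) : Prop := 0 < l ∧ ∀ s, γ (s + l) = γ s

/-- 2×2 complex matrices. -/
abbrev Mat2 := Matrix (Fin 2) (Fin 2) ℂ

def E1 : Mat2 := !![0, Complex.I; Complex.I, 0]
def E2 : Mat2 := !![0, -1; 1, 0]
def E3 : Mat2 := !![Complex.I, 0; 0, -Complex.I]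

/-- The identification of ℝ³ with su(2) via the orthonormal basis e₁, e₂, e₃. -/
def toSu2 (v : R3) : Mat2 := (v 0 : ℂ) • E1 + (v 1 : ℂ) • E2 + (v 2 : ℂ) • E3

/-- The adjoint action `Ad(a)x = a x a⁻¹`. -/
def AdM (a x : Mat2) : Mat2 := a * x * a⁻¹

/-- `c : ℝ → SU(2)` is a lift of the regular curve `γ` in S²:
it is smooth (entrywise), takes values in SU(2), and satisfies
`Ad(c(s))e₃ = γ(s)` and `Ad(c(s))e₁ = γ'(s)/|γ'(s)|` under `toSu2`. -/
structure IsLift (γ : ℝ → R3) (c : ℝ → Mat2) : Prop where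
  mem : ∀ s, c s ∈ Matrix.specialUnitaryGroup (Fin 2) ℂ
  smooth : ∀ i j, ContDiff ℝ (⊤ : ℕ∞) fun s => c s i j
  ad3 : ∀ s, AdM (c s) E3 = toSu2 (γ s)
  ad1 : ∀ s, AdM (c s) E1 = toSu2 ((norm3 (deriv γ s))⁻¹ • deriv γ s)

/-- The entrywise derivative of a matrix-valued curve. -/
def matDeriv (c : ℝ → Mat2) (s : ℝ) : Mat2 :=
  Matrix.of fun i j => deriv (fun t => c t i j) s

/-- The map `f_{γ₁,γ₂}(s₁,s₂) = c₁(0)⁻¹ c₁(s₁) c₂(s₂)⁻¹ c₂(0)` associated to lifts `c₁, c₂`. -/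
def fmap (c1 c2 : ℝ → Mat2) (s1 s2 : ℝ) : Mat2 :=
  (c1 0)⁻¹ * c1 s1 * (c2 s2)⁻¹ * c2 0

/-- `(γ₁, γ₂)` is an admissible pair. -/
structure IsAdmissiblePair (γ1 γ2 : ℝ → R3) : Prop where
  reg1 : IsRegularCurve γ1
  reg2 : IsRegularCurve γ2
  param1 : ∀ s, norm3 (deriv γ1 s) ^ 2 * (1 + kappa γ1 s ^ 2) = 4
  param2 : ∀ s, norm3 (deriv γ2 s) ^ 2 * (1 + kappa γ2 s ^ 2) = 4
  curv : ∀ s1 s2, kappa γ2 s2 < kappa γ1 s1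

/-- The restriction of `γ` to `[a,b]` is a shell. -/
def IsShell (γ : ℝ → R3) (a b : ℝ) : Prop :=
  a < b ∧ Set.InjOn γ (Set.Ico a b) ∧ γ a = γ b ∧
    LinearIndependent ℝ ![deriv γ a, deriv γ b]

/-- A positive shell: `det(γ(a), γ'(a), γ'(b)) < 0`. -/
def IsPositiveShell (γ : ℝ → R3) (a b : ℝ) : Prop :=
  IsShell γ a b ∧ det3 (γ a) (deriv γ a) (deriv γ b) < 0

/-- A negative shell: `det(γ(a), γ'(a), γ'(b)) > 0`. -/
def IsNegativeShell (γ : ℝ → R3) (a b : ℝ) : Prop :=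
  IsShell γ a b ∧ 0 < det3 (γ a) (deriv γ a) (deriv γ b)

/-- The unit sphere S² in ℝ³. -/
def sphere2 : Set R3 := {x | dot3 x x = 1}

/-- The μ-circle with center `o ∈ S²`. -/
def muCircle (μ : ℝ) (o : R3) : Set R3 :=
  {x | dot3 x x = 1 ∧ dot3 x o = μ / Real.sqrt (1 + μ ^ 2)}

/-- The (open) interior domain of the μ-circle with center `o ∈ S²`. -/
def muDisk (μ : ℝ) (o : R3) : Set R3 :=
  {x | dot3 x x = 1 ∧ μ / Real.sqrt (1 + μ ^ 2) < dot3 x o}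

def normalize3 (v : R3) : R3 := (norm3 v)⁻¹ • v

/-- `Δ` is the interior domain of the shell `γ|_{[a,b]}`: it is a connected component of the
complement of the image of the shell in S², and for each `s ∈ (a,b)` the points obtained by
pushing `γ(s)` slightly in the direction `σ • n(s)` (σ = 1 for a positive shell, σ = -1 for a
negative shell) belong to `Δ`. -/
def IsInteriorDomain (γ : ℝ → R3) (a b σ : ℝ) (Δ : Set R3) : Prop :=
  (∃ p ∈ sphere2 \ γ '' Set.Icc a b,
      Δ = connectedComponentIn (sphere2 \ γ '' Set.Icc a b) p) ∧
    ∀ s ∈ Set.Ioo a b, ∃ ε > 0, ∀ δ ∈ Set.Ioo (0 : ℝ) ε,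
      normalize3 (γ s + (σ * δ) • unitNormal γ s) ∈ Δ

/-- The center `o_t = (μ γ(t) + n(t))/√(1+μ²)` of the tangent μ-circle to `γ` at `γ(t)`
on the normal side. -/
def tangentCenter (μ : ℝ) (γ : ℝ → R3) (t : ℝ) : R3 :=
  (Real.sqrt (1 + μ ^ 2))⁻¹ • (μ • γ t + unitNormal γ t)

/-- The rotation of ℝ³ through angle `θ` about the oriented (unit) axis `o`. -/
def rot3 (o : R3) (θ : ℝ) (x : R3) : R3 :=
  Real.cos θ • x + Real.sin θ • cross3 o x + ((1 - Real.cos θ) * dot3 o x) • o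

/-- A closed regular curve of period `l` is generic: every self-intersection is a
transversal double point. -/
def IsGeneric (γ : ℝ → R3) (l : ℝ) : Prop :=
  ∀ s t : ℝ, γ s = γ t → (¬∃ k : ℤ, s - t = k * l) →
    LinearIndependent ℝ ![deriv γ s, deriv γ t] ∧
      ∀ u : ℝ, γ u = γ s → (∃ k : ℤ, u - s = k * l) ∨ (∃ k : ℤ, u - t = k * l)

/-- The number of crossings (self-intersection points) of a closed curve of period `l`. -/
def crossings (γ : ℝ → R3) (l : ℝ) : ℕ :=
  Set.ncard {p : R3 | ∃ s t : ℝ, γ s = p ∧ γ t = p ∧ ¬∃ k : ℤ, s - t = k * l}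

/-- The spherical (geodesic) distance on S³, identified with SU(2):
`dist(A,B) = arccos(Re trace(A Bᴴ)/2)`, which corresponds to the round distance on the
unit sphere S³ ⊂ ℝ⁴. -/
def distS3 (A B : Mat2) : ℝ := Real.arccos ((Matrix.trace (A * Bᴴ)).re / 2)

/-- The extrinsic diameter of the image of the map `f` associated to the lifts `c₁, c₂`. -/
def extDiam (c1 c2 : ℝ → Mat2) : ℝ :=
  sSup {d : ℝ | ∃ s1 s2 u1 u2 : ℝ, d = distS3 (fmap c1 c2 s1 s2) (fmap c1 c2 u1 u2)}

/-- The parallel curve `γ^θ = (cos θ) γ + (sin θ) n`. -/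
def parallelCurve (γ : ℝ → R3) (θ : ℝ) (s : ℝ) : R3 :=
  Real.cos θ • γ s + Real.sin θ • unitNormal γ s

/-- The arclength-type parameter `s(t) = (1/2)∫₀ᵗ |γ'(u)|√(1+κ(u)²) du`. -/
def arcParam (γ : ℝ → R3) (t : ℝ) : ℝ :=
  (1 / 2) * ∫ u in (0 : ℝ)..t, norm3 (deriv γ u) * Real.sqrt (1 + kappa γ u ^ 2)

/- Since `κ > μ`, the center of the tangent `μ`-circle moves along `-γ'`, so on the final arc
`[d, b]` of the shell the later points of `γ` lie inside the earlier tangent circles. This rules out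
`t < x`. For `x < t` put `F (x, t) = ⟨γ x, o_t⟩` and consider the pairs where `γ x` lies on the
tangent circle at `γ t`. There neither partial derivative of `F` vanishes, and a compactness
argument shows that they have opposite signs; hence, if `⟨γ x, γ' t⟩ ≤ 0` for one such pair, both
parameters can be increased until `t = b`. At `t = b` this is impossible: the initial and final arcs
of the shell both turn counterclockwise about the double point `γ b`, the shell is negative, and it
is inscribed in `C`. So `⟨γ x, γ' t⟩ > 0`, which means that the arc of the tangent circle from `γ x`
to `γ t` is longer than a half turn. It starts and ends in the closed disk bounded by `C`, a
distinct circle of the same radius, whereas the antipode on the tangent circle of its starting point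
is exterior to `C`, so it meets `C` exactly twice. -/

open Set Filter Topology

section Calculus

theorem eventually_nhdsGT_pos_of_hasDerivAt_pos {f : ℝ → ℝ} {f' a : ℝ} (hf : HasDerivAt f f' a)
    (ha : f a = 0) (hf' : 0 < f') : ∀ᶠ x in 𝓝[>] a, 0 < f x := by
  filter_upwards [nhdsWithin_le_nhds (eventually_nhdsWithin_sign_eq_of_deriv_pos
    (by rwa [hf.deriv]) ha), self_mem_nhdsWithin] with x hx hax
  rwa [sign_pos (sub_pos.2 hax), sign_eq_one_iff] at hx

theorem eventually_nhdsGT_neg_of_hasDerivAt_neg {f : ℝ → ℝ} {f' a : ℝ} (hf : HasDerivAt f f' a)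
    (ha : f a = 0) (hf' : f' < 0) : ∀ᶠ x in 𝓝[>] a, f x < 0 := by
  simpa using eventually_nhdsGT_pos_of_hasDerivAt_pos hf.neg (by simpa using ha) (neg_pos.2 hf')

theorem hasDerivAt_nonpos_of_neg_right {f : ℝ → ℝ} {f' a b : ℝ} (hf : HasDerivAt f f' a)
    (hab : a < b) (ha : f a = 0) (hneg : ∀ x ∈ Ioc a b, f x < 0) : f' ≤ 0 := by
  by_contra! hf'
  obtain ⟨x, hpos, hx⟩ := ((eventually_nhdsGT_pos_of_hasDerivAt_pos hf ha hf').and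
    (Ioc_mem_nhdsGT hab)).exists
  exact (hneg x hx).not_gt hpos

theorem exists_last_zero_of_pos_of_neg {f f' : ℝ → ℝ} (hf : ∀ x, HasDerivAt f (f' x) x) {a b : ℝ}
    (hab : a < b) (ha : 0 < f a) (hb : f b < 0) :
    ∃ z ∈ Ioo a b, f z = 0 ∧ f' z ≤ 0 ∧ ∀ x ∈ Ioc z b, f x < 0 := by
  have hcont : Continuous f := continuous_iff_continuousAt.2 fun x => (hf x).continuousAt
  obtain ⟨z, ⟨⟨haz, hzb⟩, hz⟩, hmax⟩ := (isCompact_Icc.inter_right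
    (isClosed_le continuous_const hcont : IsClosed {x | 0 ≤ f x})).exists_isGreatest
      ⟨a, left_mem_Icc.2 hab.le, ha.le⟩
  have hneg : ∀ x ∈ Ioc z b, f x < 0 := fun x hx => by
    by_contra! hpos
    exact (hmax ⟨⟨haz.trans hx.1.le, hx.2⟩, hpos⟩).not_gt hx.1
  obtain ⟨y, ⟨hzy, hyb⟩, hy⟩ := intermediate_value_Icc' hzb hcont.continuousOn
    (show (0 : ℝ) ∈ Icc (f b) (f z) from ⟨hb.le, hz⟩)
  obtain rfl : y = z := le_antisymm (hmax ⟨⟨haz.trans hzy, hyb⟩, hy.ge⟩) hzy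
  have hay : a < y := haz.lt_of_ne fun h => ha.ne' (h ▸ hy)
  have hyb : y < b := hzb.lt_of_ne fun h => hb.ne (h ▸ hy)
  exact ⟨y, ⟨hay, hyb⟩, hy, hasDerivAt_nonpos_of_neg_right (hf y) hyb hy hneg, hneg⟩

theorem exists_first_zero_of_neg_of_pos {f f' : ℝ → ℝ} (hf : ∀ x, HasDerivAt f (f' x) x) {a b : ℝ}
    (hab : a < b) (ha : f a < 0) (hb : 0 < f b) :
    ∃ z ∈ Ioo a b, f z = 0 ∧ 0 ≤ f' z ∧ ∀ x ∈ Ico a z, f x < 0 := by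
  obtain ⟨z, hz, hfz, hf'z, hneg⟩ := exists_last_zero_of_pos_of_neg
    (f := fun x => f (-x)) (f' := fun x => -f' (-x)) (a := -b) (b := -a)
    (fun x => by simpa [Function.comp_def] using (hf (-x)).scomp x (hasDerivAt_neg x))
    (neg_lt_neg hab) (by simpa using hb) (by simpa using ha)
  refine ⟨-z, ⟨lt_neg.1 hz.2, neg_lt.1 hz.1⟩, hfz, neg_nonpos.1 hf'z, fun x hx => ?_⟩
  simpa using hneg (-x) ⟨lt_neg.1 hx.2, neg_le_neg hx.1⟩

theorem lt_of_strictConvexOn_of_hasDerivAt_zero {f : ℝ → ℝ} {S : Set ℝ} {a x : ℝ}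
    (hf : StrictConvexOn ℝ S f) (ha : a ∈ S) (hd : HasDerivAt f 0 a) (hx : x ∈ S) (hxa : x ≠ a) :
    f a < f x := by
  rcases hxa.lt_or_gt with hlt | hlt
  · have hslope := hf.slope_lt_of_hasDerivAt hx ha hlt hd
    rw [slope_def_field, div_lt_iff₀ (sub_pos.2 hlt), zero_mul] at hslope
    exact sub_neg.1 hslope
  · exact (slope_pos_iff hlt).1 (hf.lt_slope_of_hasDerivAt ha hx hlt hd)

/- A ball intersected with the quadrant above `z` is convex, hence connected, and contains points
where `f` is positive and points where `f` is negative. -/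
theorem frequently_eq_zero_nhdsGT {f : ℝ × ℝ → ℝ} (hf : Continuous f) {z : ℝ × ℝ} (hz : f z = 0)
    {p q : ℝ} (hp : HasDerivAt (fun s => f (s, z.2)) p z.1)
    (hq : HasDerivAt (fun t => f (z.1, t)) q z.2) (hpq : p * q < 0) : ∃ᶠ x in 𝓝[>] z, f x = 0 := by
  wlog hpos : 0 < p generalizing f p q
  · have hp0 : p ≠ 0 := fun h => by simp [h] at hpq
    simpa using this hf.neg (by simpa using hz) hp.neg hq.neg (by linarith)
      (neg_pos.2 (hp0.lt_of_le (not_lt.1 hpos)))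
  have hq0 : q < 0 := by nlinarith
  refine (nhdsWithin_hasBasis Metric.nhds_basis_ball _).frequently_iff.2 fun ε hε => ?_
  have hleft : Tendsto (fun s => (s, z.2)) (𝓝[>] z.1) (𝓝[>] z) :=
    tendsto_nhdsWithin_iff.2 ⟨(Continuous.tendsto' (by fun_prop) _ _ rfl).mono_left inf_le_left,
      eventually_mem_nhdsWithin.mono fun s hs => Prod.mk_lt_mk.2 (Or.inl ⟨hs, le_rfl⟩)⟩
  have hright : Tendsto (fun t => (z.1, t)) (𝓝[>] z.2) (𝓝[>] z) :=
    tendsto_nhdsWithin_iff.2 ⟨(Continuous.tendsto' (by fun_prop) _ _ rfl).mono_left inf_le_left,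
      eventually_mem_nhdsWithin.mono fun t ht => Prod.mk_lt_mk.2 (Or.inr ⟨le_rfl, ht⟩)⟩
  have hmem : Metric.ball z ε ∩ Ioi z ∈ 𝓝[>] z :=
    inter_mem (nhdsWithin_le_nhds (Metric.ball_mem_nhds z hε)) self_mem_nhdsWithin
  obtain ⟨s, hs, hs'⟩ := ((eventually_nhdsGT_pos_of_hasDerivAt_pos hp hz hpos).and
    (hleft hmem)).exists
  obtain ⟨t, ht, ht'⟩ := ((eventually_nhdsGT_neg_of_hasDerivAt_neg hq hz hq0).and
    (hright hmem)).exists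
  exact ((convex_ball z ε).inter (convex_Ioi z)).isPreconnected.intermediate_value ht' hs'
    hf.continuousOn ⟨ht.le, hs.le⟩

theorem exists_maximal_mem_of_isCompact {K : Set (ℝ × ℝ)} (hK : IsCompact K) (hne : K.Nonempty) :
    ∃ z, Maximal (· ∈ K) z := by
  obtain ⟨z, hz, hmax⟩ := hK.exists_isMaxOn hne
    (continuous_fst.add continuous_snd).continuousOn
  refine ⟨z, hz, fun x hx hzx => ?_⟩
  have hsum : x.1 + x.2 ≤ z.1 + z.2 := hmax hx
  exact ⟨by linarith [hzx.2], by linarith [hzx.1]⟩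

theorem exists_mem_mul_nonneg_of_isCompact {f fs ft : ℝ × ℝ → ℝ} (hf : Continuous f)
    (hs : ∀ z, HasDerivAt (fun s => f (s, z.2)) (fs z) z.1)
    (ht : ∀ z, HasDerivAt (fun t => f (z.1, t)) (ft z) z.2) {K : Set (ℝ × ℝ)} (hK : IsCompact K)
    (hne : K.Nonempty) (hzero : ∀ z ∈ K, f z = 0)
    (hlocal : ∀ z ∈ K, ∀ᶠ x in 𝓝 z, z ≤ x → f x = 0 → x ∈ K) : ∃ z ∈ K, 0 ≤ fs z * ft z := by
  obtain ⟨z, hz⟩ := exists_maximal_mem_of_isCompact hK hne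
  refine ⟨z, hz.prop, not_lt.1 fun hneg => ?_⟩
  obtain ⟨x, ⟨hx, hxK⟩, hzx⟩ := (((frequently_eq_zero_nhdsGT hf (hzero z hz.prop) (hs z) (ht z)
    hneg).and_eventually (nhdsWithin_le_nhds (hlocal z hz.prop))).and_eventually
      self_mem_nhdsWithin).exists
  exact hz.not_gt (hxK (mem_Ioi.1 hzx).le hx) hzx

theorem exists_mem_mul_nonpos_of_isCompact {f fs ft : ℝ × ℝ → ℝ} (hf : Continuous f)
    (hs : ∀ z, HasDerivAt (fun s => f (s, z.2)) (fs z) z.1)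
    (ht : ∀ z, HasDerivAt (fun t => f (z.1, t)) (ft z) z.2) {K : Set (ℝ × ℝ)} (hK : IsCompact K)
    (hne : K.Nonempty) (hzero : ∀ z ∈ K, f z = 0)
    (hlocal : ∀ z ∈ K, ∀ᶠ x in 𝓝 z, z.1 ≤ x.1 → x.2 ≤ z.2 → f x = 0 → x ∈ K) :
    ∃ z ∈ K, fs z * ft z ≤ 0 := by
  let φ : ℝ × ℝ ≃ₜ ℝ × ℝ := (Homeomorph.refl ℝ).prodCongr (Homeomorph.neg ℝ)
  obtain ⟨z, hz, hsign⟩ := exists_mem_mul_nonneg_of_isCompact (f := f ∘ φ) (fs := fs ∘ φ)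
    (ft := fun z => ft (φ z) * -1) (hf.comp φ.continuous) (fun z => hs (φ z))
    (fun z => (ht (φ z)).comp z.2 (hasDerivAt_neg z.2))
    (φ.isCompact_preimage.2 hK) (hne.preimage φ.surjective) (fun z hz => hzero (φ z) hz)
    (fun z hz => (φ.continuous.continuousAt.eventually (hlocal (φ z) hz)).mono
      fun x hx hle => hx hle.1 (neg_le_neg hle.2))
  exact ⟨φ z, hz, by simpa using hsign⟩

theorem isCompact_inter_of_diagonal_gap {S : Set (ℝ × ℝ)} (hS : IsClosed S)
    (hgap : ∀ y, ∀ᶠ z in 𝓝 (y, y), z ∈ S → ¬z.1 < z.2) (p q : ℝ) :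
    IsCompact (S ∩ {z | p ≤ z.1 ∧ z.1 < z.2 ∧ z.2 ≤ q}) := by
  have hclosed : IsClosed (S ∩ {z | p ≤ z.1 ∧ z.1 ≤ z.2 ∧ z.2 ≤ q}) :=
    hS.inter ((isClosed_le continuous_const continuous_fst).inter
      ((isClosed_le continuous_fst continuous_snd).inter
        (isClosed_le continuous_snd continuous_const)))
  refine isCompact_Icc.of_isClosed_subset (isClosed_iff_frequently.2 fun z hz => ?_)
    fun z ⟨_, hp, hlt, hq⟩ =>
      (⟨⟨hp, hp.trans hlt.le⟩, hlt.le.trans hq, hq⟩ : z ∈ Icc (p, p) (q, q))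
  obtain ⟨hzS, hp, hle, hq⟩ := isClosed_iff_frequently.1 hclosed z
    (hz.mono fun x ⟨hx, hp, hlt, hq⟩ => ⟨hx, hp, hlt.le, hq⟩)
  refine ⟨hzS, hp, hle.lt_of_ne fun heq => ?_, hq⟩
  have hdiag : z = (z.1, z.1) := Prod.ext rfl heq.symm
  have hgapz : ∀ᶠ x in 𝓝 z, x ∈ S → ¬x.1 < x.2 := by
    rw [hdiag]
    exact hgap z.1
  obtain ⟨x, ⟨hxS, -, hlt, -⟩, hnot⟩ := (hz.and_eventually hgapz).exists
  exact hnot hxS hlt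

theorem not_isLocalMin_of_deriv_neg_right {f f' : ℝ → ℝ} {a : ℝ} (hf : ∀ x, HasDerivAt f (f' x) x)
    (hf' : ∀ᶠ x in 𝓝[>] a, f' x < 0) : ¬IsLocalMin f a := by
  intro hmin
  obtain ⟨c, hac, hc⟩ := mem_nhdsGT_iff_exists_Ioo_subset.1 hf'
  have hmin' : ∀ᶠ x in 𝓝[>] a, f a ≤ f x := nhdsWithin_le_nhds hmin
  obtain ⟨x, hx, hax, hxc⟩ := (hmin'.and (Ioo_mem_nhdsGT hac)).exists
  obtain ⟨y, hy, hslope⟩ := exists_hasDerivAt_eq_slope f f' hax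
    (fun z _ => (hf z).continuousAt.continuousWithinAt) fun z _ => hf z
  have hneg : f' y < 0 := hc ⟨hy.1, hy.2.trans hxc⟩
  rw [hslope] at hneg
  exact hneg.not_ge (div_nonneg (sub_nonneg.2 hx) (sub_pos.2 hax).le)

variable {ι : Type*} [Fintype ι] {f g : ℝ → ι → ℝ} {f' g' : ι → ℝ} {s : ℝ}

theorem hasDerivAt_dotProduct (hf : HasDerivAt f f' s) (hg : HasDerivAt g g' s) :
    HasDerivAt (fun t => f t ⬝ᵥ g t) (f' ⬝ᵥ g s + f s ⬝ᵥ g') s := by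
  rw [hasDerivAt_pi] at hf hg
  simpa only [dotProduct, ← Finset.sum_add_distrib] using
    HasDerivAt.fun_sum fun i _ => (hf i).fun_mul (hg i)

theorem hasDerivAt_dotProduct_const (hf : HasDerivAt f f' s) (a : ι → ℝ) :
    HasDerivAt (fun t => f t ⬝ᵥ a) (f' ⬝ᵥ a) s := by
  simpa using hasDerivAt_dotProduct hf (hasDerivAt_const s a)

theorem hasDerivAt_const_dotProduct (hf : HasDerivAt f f' s) (a : ι → ℝ) :
    HasDerivAt (fun t => a ⬝ᵥ f t) (a ⬝ᵥ f') s := by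
  simpa using hasDerivAt_dotProduct (hasDerivAt_const s a) hf

theorem dotProduct_add_dotProduct_eq_zero {r : ℝ} (hf : HasDerivAt f f' s) (hg : HasDerivAt g g' s)
    (hfg : ∀ t, f t ⬝ᵥ g t = r) : f' ⬝ᵥ g s + f s ⬝ᵥ g' = 0 := by
  have hd := hasDerivAt_dotProduct hf hg
  simp only [hfg] at hd
  exact hd.unique (hasDerivAt_const s r)

theorem dotProduct_eq_zero_of_dotProduct_self_eq {r : ℝ} (hf : HasDerivAt f f' s)
    (hff : ∀ t, f t ⬝ᵥ f t = r) : f' ⬝ᵥ f s = 0 := by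
  have h := dotProduct_add_dotProduct_eq_zero hf hf hff
  rw [dotProduct_comm (f s)] at h
  linarith

end Calculus

section UnitVectors

variable {ι : Type*} [Fintype ι] {a b : ι → ℝ}

theorem dotProduct_self_nonneg (a : ι → ℝ) : 0 ≤ a ⬝ᵥ a := by
  simpa using dotProduct_star_self_nonneg a

theorem dotProduct_self_pos (ha : a ≠ 0) : 0 < a ⬝ᵥ a :=
  (dotProduct_self_nonneg a).lt_of_ne' (dotProduct_self_eq_zero.not.2 ha)

theorem sub_dotProduct_sub_self (a b : ι → ℝ) :
    (a - b) ⬝ᵥ (a - b) = a ⬝ᵥ a - 2 * a ⬝ᵥ b + b ⬝ᵥ b := by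
  simp only [sub_dotProduct, dotProduct_sub, dotProduct_comm b a]
  ring

theorem dotProduct_le_one (ha : a ⬝ᵥ a = 1) (hb : b ⬝ᵥ b = 1) : a ⬝ᵥ b ≤ 1 := by
  linarith [sub_dotProduct_sub_self a b, dotProduct_self_nonneg (a - b)]

theorem dotProduct_lt_one (ha : a ⬝ᵥ a = 1) (hb : b ⬝ᵥ b = 1) (hab : a ≠ b) : a ⬝ᵥ b < 1 := by
  linarith [sub_dotProduct_sub_self a b, dotProduct_self_pos (sub_ne_zero.2 hab)]

theorem eq_of_dotProduct_eq_one (ha : a ⬝ᵥ a = 1) (hb : b ⬝ᵥ b = 1) (hab : a ⬝ᵥ b = 1) :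
    a = b := by
  by_contra hne
  exact (dotProduct_lt_one ha hb hne).ne hab

end UnitVectors

section CrossProduct

variable {O a b c v : Fin 3 → ℝ}

theorem dotProduct_cross_eq_zero_of_orthogonal (hv : v ≠ 0) (ha : a ⬝ᵥ v = 0) (hb : b ⬝ᵥ v = 0)
    (hc : c ⬝ᵥ v = 0) : a ⬝ᵥ b ⨯₃ c = 0 := by
  have hker : of ![a, b, c] *ᵥ v = 0 := funext fun i => by
    fin_cases i
    exacts [ha, hb, hc]
  exact (triple_product_eq_det a b c).trans (exists_mulVec_eq_zero_iff.1 ⟨v, hv, hker⟩)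

theorem dotProduct_cross_mul_dotProduct_cross (a b c d : Fin 3 → ℝ) :
    a ⬝ᵥ b ⨯₃ c * a ⬝ᵥ d ⨯₃ c =
      a ⬝ᵥ a * (b ⬝ᵥ d * c ⬝ᵥ c - b ⬝ᵥ c * d ⬝ᵥ c)
        - a ⬝ᵥ d * (a ⬝ᵥ b * c ⬝ᵥ c - b ⬝ᵥ c * a ⬝ᵥ c)
        + a ⬝ᵥ c * (a ⬝ᵥ b * d ⬝ᵥ c - b ⬝ᵥ d * a ⬝ᵥ c) := by
  simp only [vec3_dotProduct, cross_apply, cons_val]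
  ring

theorem one_sub_sq_mul_one_sub_sq (hO : O ⬝ᵥ O = 1) (ha : a ⬝ᵥ a = 1) (hb : b ⬝ᵥ b = 1) :
    (1 - (O ⬝ᵥ a) ^ 2) * (1 - (O ⬝ᵥ b) ^ 2) =
      (a ⬝ᵥ b - O ⬝ᵥ a * O ⬝ᵥ b) ^ 2 + (O ⬝ᵥ a ⨯₃ b) ^ 2 := by
  have h := dotProduct_cross_mul_dotProduct_cross O a b a
  rw [hO, ha, hb] at h
  linear_combination -h

theorem eq_or_eq_reflection_of_coplanar {p : Fin 3 → ℝ} {h : ℝ} (hp : p ⬝ᵥ p = 1) (ha : a ⬝ᵥ a = 1)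
    (hb : b ⬝ᵥ b = 1) (hpa : p ⬝ᵥ a = h) (hpb : p ⬝ᵥ b = h) (hcop : p ⬝ᵥ a ⨯₃ b = 0) :
    a = b ∨ a = (2 * h) • p - b := by
  have hgram := one_sub_sq_mul_one_sub_sq hp ha hb
  rw [hpa, hpb, hcop] at hgram
  have hprod : (1 - a ⬝ᵥ b) * (1 + a ⬝ᵥ b - 2 * h ^ 2) = 0 := by linear_combination hgram
  have hreflect : ∀ x, x ⬝ᵥ ((2 * h) • p - b) = 2 * h * p ⬝ᵥ x - x ⬝ᵥ b := fun x => by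
    rw [dotProduct_sub, dotProduct_smul, smul_eq_mul, dotProduct_comm x p]
  rcases mul_eq_zero.1 hprod with hab | hab
  · exact Or.inl (eq_of_dotProduct_eq_one ha hb (by linarith))
  · refine Or.inr (eq_of_dotProduct_eq_one ha ?_ ?_)
    · simp only [sub_dotProduct, dotProduct_sub, smul_dotProduct, dotProduct_smul, smul_eq_mul,
        dotProduct_comm b p, hp, hpb, hb]
      ring
    · rw [hreflect, hpa]
      linear_combination -hab

end CrossProduct

section CrossCalculus

theorem continuous_cross {X : Type*} [TopologicalSpace X] {f g : X → Fin 3 → ℝ} (hf : Continuous f)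
    (hg : Continuous g) : Continuous fun x => f x ⨯₃ g x := by
  simp only [cross_apply]
  fun_prop

variable {f g : ℝ → Fin 3 → ℝ} {f' g' : Fin 3 → ℝ} {s : ℝ}

theorem hasDerivAt_cross (hf : HasDerivAt f f' s) (hg : HasDerivAt g g' s) :
    HasDerivAt (fun t => f t ⨯₃ g t) (f' ⨯₃ g s + f s ⨯₃ g') s := by
  rw [hasDerivAt_pi] at hf hg ⊢
  have hcoord : ∀ i j, HasDerivAt (fun t => f t i * g t j - f t j * g t i)
      (f' i * g s j + f s i * g' j - (f' j * g s i + f s j * g' i)) s := fun i j =>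
    ((hf i).fun_mul (hg j)).fun_sub ((hf j).fun_mul (hg i))
  have hexpand : f' ⨯₃ g s + f s ⨯₃ g' =
      ![f' 1 * g s 2 + f s 1 * g' 2 - (f' 2 * g s 1 + f s 2 * g' 1),
        f' 2 * g s 0 + f s 2 * g' 0 - (f' 0 * g s 2 + f s 0 * g' 2),
        f' 0 * g s 1 + f s 0 * g' 1 - (f' 1 * g s 0 + f s 1 * g' 0)] := by
    ext i
    fin_cases i <;> simp [cross_apply] <;> ring
  rw [hexpand]
  intro i
  fin_cases i
  exacts [hcoord 1 2, hcoord 2 0, hcoord 0 1]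

end CrossCalculus

section TangentCircles

/-- A curve `γ` on the unit sphere with velocity `v` and acceleration `w`, together with the family
of circles `{x | x ⬝ᵥ o s = h}` tangent to it: the circle of parameter `s` touches `γ` at `γ s`, and
its center `o s` moves along `-v s` with positive speed factor `lam s`. Recording the family
abstractly makes it invariant under reversal of the parameter. -/
structure IsTangentCircleFamily (h : ℝ) (γ v w o : ℝ → Fin 3 → ℝ) (lam : ℝ → ℝ) : Prop where
  height_pos : 0 < h
  hasDerivAt : ∀ s, HasDerivAt γ (v s) s
  hasDerivAt_velocity : ∀ s, HasDerivAt v (w s) s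
  continuous_acceleration : Continuous w
  hasDerivAt_center : ∀ s, HasDerivAt o (-lam s • v s) s
  lam_pos : ∀ s, 0 < lam s
  sphere : ∀ s, γ s ⬝ᵥ γ s = 1
  sphere_center : ∀ s, o s ⬝ᵥ o s = 1
  height : ∀ s, γ s ⬝ᵥ o s = h
  tangent : ∀ s, v s ⬝ᵥ o s = 0
  velocity_ne_zero : ∀ s, v s ≠ 0

/-- On `[p, q]` the later points of `γ` lie inside the earlier circles of the family `o`. -/
def IsNestedOn (h : ℝ) (γ o : ℝ → Fin 3 → ℝ) (p q : ℝ) : Prop :=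
  ∀ ⦃t x⦄, p ≤ t → t < x → x ≤ q → h < γ x ⬝ᵥ o t

/-- The pairs `(s, u)` with `p ≤ s < u ≤ q` such that `γ s` lies on the circle centered at `o u`. -/
def incidences (h : ℝ) (γ o : ℝ → Fin 3 → ℝ) (p q : ℝ) : Set (ℝ × ℝ) :=
  {z | γ z.1 ⬝ᵥ o z.2 = h} ∩ {z | p ≤ z.1 ∧ z.1 < z.2 ∧ z.2 ≤ q}

namespace IsTangentCircleFamily

variable {h : ℝ} {γ v w o : ℝ → Fin 3 → ℝ} {lam : ℝ → ℝ} {p q s t u : ℝ}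

theorem reverse (H : IsTangentCircleFamily h γ v w o lam) :
    IsTangentCircleFamily h (fun s => γ (-s)) (fun s => -v (-s)) (fun s => w (-s))
      (fun s => o (-s)) (fun s => lam (-s)) where
  height_pos := H.height_pos
  hasDerivAt s := by
    simpa [Function.comp_def] using (H.hasDerivAt (-s)).scomp s (hasDerivAt_neg s)
  hasDerivAt_velocity s := by
    simpa [Function.comp_def, Pi.neg_def] using
      ((H.hasDerivAt_velocity (-s)).scomp s (hasDerivAt_neg s)).neg
  continuous_acceleration := H.continuous_acceleration.comp continuous_neg
  hasDerivAt_center s := by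
    simpa [Function.comp_def] using (H.hasDerivAt_center (-s)).scomp s (hasDerivAt_neg s)
  lam_pos s := H.lam_pos (-s)
  sphere s := H.sphere (-s)
  sphere_center s := H.sphere_center (-s)
  height s := H.height (-s)
  tangent s := by rw [neg_dotProduct, H.tangent, neg_zero]
  velocity_ne_zero s := neg_ne_zero.2 (H.velocity_ne_zero (-s))

theorem continuous (H : IsTangentCircleFamily h γ v w o lam) : Continuous γ :=
  continuous_iff_continuousAt.2 fun s => (H.hasDerivAt s).continuousAt

theorem continuous_velocity (H : IsTangentCircleFamily h γ v w o lam) : Continuous v :=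
  continuous_iff_continuousAt.2 fun s => (H.hasDerivAt_velocity s).continuousAt

theorem continuous_center (H : IsTangentCircleFamily h γ v w o lam) : Continuous o :=
  continuous_iff_continuousAt.2 fun s => (H.hasDerivAt_center s).continuousAt

theorem velocity_dotProduct_velocity_pos (H : IsTangentCircleFamily h γ v w o lam) (s : ℝ) :
    0 < v s ⬝ᵥ v s :=
  dotProduct_self_pos (H.velocity_ne_zero s)

theorem velocity_dotProduct_self (H : IsTangentCircleFamily h γ v w o lam) (s : ℝ) :
    v s ⬝ᵥ γ s = 0 :=
  dotProduct_eq_zero_of_dotProduct_self_eq (H.hasDerivAt s) H.sphere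

theorem acceleration_dotProduct_center (H : IsTangentCircleFamily h γ v w o lam) (s : ℝ) :
    w s ⬝ᵥ o s = lam s * v s ⬝ᵥ v s := by
  have h :=
    dotProduct_add_dotProduct_eq_zero (H.hasDerivAt_velocity s) (H.hasDerivAt_center s) H.tangent
  rw [dotProduct_smul, smul_eq_mul] at h
  linarith

theorem acceleration_dotProduct_self (H : IsTangentCircleFamily h γ v w o lam) (s : ℝ) :
    w s ⬝ᵥ γ s = -(v s ⬝ᵥ v s) :=
  eq_neg_of_add_eq_zero_left (dotProduct_add_dotProduct_eq_zero (H.hasDerivAt_velocity s)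
    (H.hasDerivAt s) H.velocity_dotProduct_self)

theorem hasDerivAt_const_dotProduct_center (H : IsTangentCircleFamily h γ v w o lam)
    (a : Fin 3 → ℝ) (t : ℝ) :
    HasDerivAt (fun t => a ⬝ᵥ o t) (-lam t * a ⬝ᵥ v t) t := by
  simpa using hasDerivAt_const_dotProduct (H.hasDerivAt_center t) a

theorem eventually_lt_dotProduct_center (H : IsTangentCircleFamily h γ v w o lam) (y : ℝ) :
    ∀ᶠ z in 𝓝 (y, y), z.1 ≠ z.2 → h < γ z.2 ⬝ᵥ o z.1 := by
  have hcont : Continuous fun z : ℝ × ℝ => w z.2 ⬝ᵥ o z.1 :=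
    (H.continuous_acceleration.comp continuous_snd).dotProduct
      (H.continuous_center.comp continuous_fst)
  have hpos : 0 < w y ⬝ᵥ o y := by
    rw [H.acceleration_dotProduct_center]
    exact mul_pos (H.lam_pos y) (H.velocity_dotProduct_velocity_pos y)
  have hnear : ∀ᶠ z : ℝ × ℝ in 𝓝 (y, y), 0 < w z.2 ⬝ᵥ o z.1 :=
    hcont.continuousAt.eventually_const_lt hpos
  obtain ⟨ε, hε, hball⟩ := Metric.eventually_nhds_iff_ball.1 hnear
  filter_upwards [Metric.ball_mem_nhds (y, y) hε] with z hz hne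
  rw [← ball_prod_same] at hz hball
  have hconvex : StrictConvexOn ℝ (Metric.ball y ε) fun x => γ x ⬝ᵥ o z.1 := by
    have hderiv : deriv (fun x => γ x ⬝ᵥ o z.1) = fun x => v x ⬝ᵥ o z.1 :=
      funext fun x => (hasDerivAt_dotProduct_const (H.hasDerivAt x) _).deriv
    refine strictConvexOn_of_deriv2_pos' (convex_ball y ε)
      (H.continuous.dotProduct continuous_const).continuousOn fun x hx => ?_
    rw [Function.iterate_succ_apply, Function.iterate_one, hderiv,
      (hasDerivAt_dotProduct_const (H.hasDerivAt_velocity x) _).deriv]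
    exact hball (z.1, x) ⟨hz.1, hx⟩
  simpa only [H.height] using lt_of_strictConvexOn_of_hasDerivAt_zero hconvex hz.1
    (H.tangent z.1 ▸ hasDerivAt_dotProduct_const (H.hasDerivAt z.1) _) hz.2 hne.symm

theorem isCompact_overlaps (H : IsTangentCircleFamily h γ v w o lam) (p q : ℝ) :
    IsCompact ({z : ℝ × ℝ | γ z.2 ⬝ᵥ o z.1 ≤ h} ∩ {z | p ≤ z.1 ∧ z.1 < z.2 ∧ z.2 ≤ q}) :=
  isCompact_inter_of_diagonal_gap
    (isClosed_le ((H.continuous.comp continuous_snd).dotProduct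
      (H.continuous_center.comp continuous_fst)) continuous_const)
    (fun y => (H.eventually_lt_dotProduct_center y).mono fun _ hz hle hlt =>
      (hz hlt.ne).not_ge hle) p q

theorem isCompact_incidences (H : IsTangentCircleFamily h γ v w o lam) (p q : ℝ) :
    IsCompact (incidences h γ o p q) := by
  have hgap : ∀ y, ∀ᶠ z in 𝓝 (y, y), z.1 ≠ z.2 → h < γ z.1 ⬝ᵥ o z.2 := fun y =>
    ((continuous_swap.tendsto (y, y)).eventually (H.eventually_lt_dotProduct_center y)).mono
      fun _ hz hne => hz hne.symm
  exact isCompact_inter_of_diagonal_gap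
    (isClosed_eq ((H.continuous.comp continuous_fst).dotProduct
      (H.continuous_center.comp continuous_snd)) continuous_const)
    (fun y => (hgap y).mono fun _ hz heq hlt => (hz hlt.ne).ne' heq) p q

theorem exists_first_contact (H : IsTangentCircleFamily h γ v w o lam)
    (hbad : ¬IsNestedOn h γ o p q) :
    ∃ t y, p ≤ t ∧ t < y ∧ y ≤ q ∧ γ y ⬝ᵥ o t = h ∧ ∀ s, p ≤ s → s < y → h ≤ γ y ⬝ᵥ o s := by
  rw [IsNestedOn] at hbad
  push Not at hbad
  obtain ⟨t₀, x₀, hpt₀, htx₀, hxq₀, hle₀⟩ := hbad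
  obtain ⟨⟨t, y⟩, ⟨hle, hpt, hty, hyq⟩, hmin⟩ := (H.isCompact_overlaps p q).exists_isMinOn
    ⟨(t₀, x₀), hle₀, hpt₀, htx₀, hxq₀⟩ continuous_snd.continuousOn
  have hbefore : ∀ s, p ≤ s → s < y → h ≤ γ y ⬝ᵥ o s := fun s hps hsy => by
    have hcont : Continuous fun x => γ x ⬝ᵥ o s := H.continuous.dotProduct continuous_const
    refine ge_of_tendsto (hcont.continuousWithinAt (s := Iio y)) ?_
    filter_upwards [Ioo_mem_nhdsLT hsy] with x hx
    by_contra! hlt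
    exact (hmin (show (s, x) ∈ _ from ⟨hlt.le, hps, hx.1, hx.2.le.trans hyq⟩)).not_gt hx.2
  exact ⟨t, y, hpt, hty, hyq, le_antisymm hle (hbefore t hpt hty), hbefore⟩

theorem eq_or_eq_reflection_of_dotProduct_velocity_eq_zero
    (H : IsTangentCircleFamily h γ v w o lam) {a : Fin 3 → ℝ} (ha : a ⬝ᵥ a = 1)
    (hheight : a ⬝ᵥ o t = h) (hperp : a ⬝ᵥ v t = 0) : a = γ t ∨ a = (2 * h) • o t - γ t := by
  refine eq_or_eq_reflection_of_coplanar (H.sphere_center t) ha (H.sphere t)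
    (by rw [dotProduct_comm, hheight]) (by rw [dotProduct_comm, H.height]) ?_
  exact dotProduct_cross_eq_zero_of_orthogonal (H.velocity_ne_zero t)
    (by rw [dotProduct_comm, H.tangent]) hperp (by rw [dotProduct_comm, H.velocity_dotProduct_self])

theorem eq_of_isLocalMin (H : IsTangentCircleFamily h γ v w o lam) {a : Fin 3 → ℝ}
    (ha : a ⬝ᵥ a = 1) (hheight : a ⬝ᵥ o t = h) (hmin : IsLocalMin (fun s => a ⬝ᵥ o s) t) :
    a = γ t := by
  have hperp : a ⬝ᵥ v t = 0 :=
    (mul_eq_zero.1 (hmin.hasDerivAt_eq_zero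
      (H.hasDerivAt_const_dotProduct_center a t))).resolve_left (neg_ne_zero.2 (H.lam_pos t).ne')
  refine (H.eq_or_eq_reflection_of_dotProduct_velocity_eq_zero ha hheight hperp).resolve_right
    fun hopp => ?_
  have hacc : 0 < a ⬝ᵥ w t := by
    rw [hopp, sub_dotProduct, smul_dotProduct, dotProduct_comm (o t), dotProduct_comm (γ t),
      H.acceleration_dotProduct_center, H.acceleration_dotProduct_self, smul_eq_mul, sub_neg_eq_add]
    have := H.height_pos
    have := H.lam_pos t
    have := H.velocity_dotProduct_velocity_pos t
    positivity
  refine not_isLocalMin_of_deriv_neg_right (H.hasDerivAt_const_dotProduct_center a) ?_ hmin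
  filter_upwards [eventually_nhdsGT_pos_of_hasDerivAt_pos
    (hasDerivAt_const_dotProduct (H.hasDerivAt_velocity t) a) hperp hacc] with s hs
  exact mul_neg_of_neg_of_pos (neg_neg_iff_pos.2 (H.lam_pos s)) hs

theorem eq_center_of_touches (H : IsTangentCircleFamily h γ v w o lam) {p : Fin 3 → ℝ}
    (hp : p ⬝ᵥ p = 1) (hheight : γ s ⬝ᵥ p = h) (hin : ∀ᶠ x in 𝓝 s, h ≤ γ x ⬝ᵥ p) : p = o s := by
  have hmin : IsLocalMin (fun x => γ x ⬝ᵥ p) s := by simpa only [IsLocalMin, IsMinFilter, hheight]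
  have hperp : v s ⬝ᵥ p = 0 :=
    hmin.hasDerivAt_eq_zero (hasDerivAt_dotProduct_const (H.hasDerivAt s) p)
  have hcoplanar : γ s ⬝ᵥ p ⨯₃ o s = 0 :=
    dotProduct_cross_eq_zero_of_orthogonal (H.velocity_ne_zero s)
      (by rw [dotProduct_comm, H.velocity_dotProduct_self]) (by rw [dotProduct_comm, hperp])
      (by rw [dotProduct_comm, H.tangent])
  refine (eq_or_eq_reflection_of_coplanar (H.sphere s) hp (H.sphere_center s) hheight (H.height s)
    hcoplanar).resolve_right fun hopp => ?_
  have hpair : Tendsto (fun x => (s, x)) (𝓝[>] s) (𝓝 (s, s)) :=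
    ((Continuous.prodMk_right s).tendsto s).mono_left nhdsWithin_le_nhds
  obtain ⟨x, ⟨hgap, hx⟩, hsx⟩ := ((hpair.eventually (H.eventually_lt_dotProduct_center s)).and
    (nhdsWithin_le_nhds hin)).and self_mem_nhdsWithin |>.exists
  have hlt := hgap (mem_Ioi.1 hsx).ne
  rw [hopp, dotProduct_sub, dotProduct_smul, smul_eq_mul] at hx
  nlinarith [H.height_pos, dotProduct_le_one (H.sphere x) (H.sphere s)]

theorem isNestedOn (H : IsTangentCircleFamily h γ v w o lam) (hinj : InjOn γ (Icc p q))
    (hfirst : ∀ x ∈ Ioc p q, h < γ x ⬝ᵥ o p) : IsNestedOn h γ o p q := by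
  by_contra hbad
  obtain ⟨t, y, hpt, hty, hyq, heq, hbefore⟩ := H.exists_first_contact hbad
  have hpt' : p < t := hpt.lt_of_ne fun hp =>
    (hfirst y ⟨hp ▸ hty, hyq⟩).ne' (hp ▸ heq)
  have hmin : IsLocalMin (fun s => γ y ⬝ᵥ o s) t := by
    filter_upwards [Ioo_mem_nhds hpt' hty] with s hs
    exact heq.trans_le (hbefore s hs.1.le hs.2)
  exact hty.ne' (hinj ⟨hpt.trans hty.le, hyq⟩ ⟨hpt, hty.le.trans hyq⟩
    (H.eq_of_isLocalMin (H.sphere y) heq hmin))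

theorem dotProduct_velocity_ne_zero (H : IsTangentCircleFamily h γ v w o lam)
    (hnest : IsNestedOn h γ o p q) (hinj : InjOn γ (Icc p q)) (hz : (s, u) ∈ incidences h γ o p q) :
    γ s ⬝ᵥ v u ≠ 0 := by
  obtain ⟨hheight, hps, hsu, huq⟩ := hz
  dsimp only at hheight hps hsu huq
  intro hperp
  rcases H.eq_or_eq_reflection_of_dotProduct_velocity_eq_zero (H.sphere s) hheight hperp with
    heq | hopp
  · exact hsu.ne (hinj ⟨hps, hsu.le.trans huq⟩ ⟨hps.trans hsu.le, huq⟩ heq)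
  · have hs : h ≤ γ s ⬝ᵥ o p := by
      rcases hps.eq_or_lt with rfl | hps
      · exact (H.height p).ge
      · exact (hnest le_rfl hps (hsu.le.trans huq)).le
    have hu := hnest le_rfl (hps.trans_lt hsu) huq
    have hcenters := dotProduct_le_one (H.sphere_center u) (H.sphere_center p)
    rw [hopp, sub_dotProduct, smul_dotProduct, smul_eq_mul] at hs
    nlinarith [H.height_pos]

theorem velocity_dotProduct_center_ne_zero (H : IsTangentCircleFamily h γ v w o lam)
    (hnest : IsNestedOn h γ o p q) (hz : (s, u) ∈ incidences h γ o p q) : v s ⬝ᵥ o u ≠ 0 := by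
  obtain ⟨hheight, hps, hsu, huq⟩ := hz
  dsimp only at hheight hps hsu huq
  intro hperp
  have hinside := hnest hps hsu huq
  have hcoplanar : γ s ⬝ᵥ o u ⨯₃ o s = 0 :=
    dotProduct_cross_eq_zero_of_orthogonal (H.velocity_ne_zero s)
      (by rw [dotProduct_comm, H.velocity_dotProduct_self]) (by rw [dotProduct_comm, hperp])
      (by rw [dotProduct_comm, H.tangent])
  rcases eq_or_eq_reflection_of_coplanar (H.sphere s) (H.sphere_center u) (H.sphere_center s)
    hheight (H.height s) hcoplanar with heq | hopp
  · exact hinside.ne' (heq ▸ H.height u)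
  · have hu := H.height u
    rw [hopp, dotProduct_sub, dotProduct_smul, smul_eq_mul] at hu
    nlinarith [H.height_pos, dotProduct_le_one (H.sphere u) (H.sphere s)]

theorem continuous_dotProduct_velocity (H : IsTangentCircleFamily h γ v w o lam) :
    Continuous fun z : ℝ × ℝ => γ z.1 ⬝ᵥ v z.2 :=
  (H.continuous.comp continuous_fst).dotProduct (H.continuous_velocity.comp continuous_snd)

theorem continuous_incidence (H : IsTangentCircleFamily h γ v w o lam) :
    Continuous fun z : ℝ × ℝ => γ z.1 ⬝ᵥ o z.2 - h :=
  ((H.continuous.comp continuous_fst).dotProduct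
    (H.continuous_center.comp continuous_snd)).sub continuous_const

theorem hasDerivAt_incidence_fst (H : IsTangentCircleFamily h γ v w o lam) (z : ℝ × ℝ) :
    HasDerivAt (fun s => γ s ⬝ᵥ o z.2 - h) (v z.1 ⬝ᵥ o z.2) z.1 :=
  (hasDerivAt_dotProduct_const (H.hasDerivAt z.1) (o z.2)).sub_const h

theorem hasDerivAt_incidence_snd (H : IsTangentCircleFamily h γ v w o lam) (z : ℝ × ℝ) :
    HasDerivAt (fun u => γ z.1 ⬝ᵥ o u - h) (-lam z.2 * γ z.1 ⬝ᵥ v z.2) z.2 :=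
  (H.hasDerivAt_const_dotProduct_center (γ z.1) z.2).sub_const h

theorem dotProduct_velocity_mul_pos (H : IsTangentCircleFamily h γ v w o lam)
    (hnest : IsNestedOn h γ o p q) (hinj : InjOn γ (Icc p q)) (hz : (s, u) ∈ incidences h γ o p q) :
    0 < γ s ⬝ᵥ v u * v s ⬝ᵥ o u := by
  set g : ℝ × ℝ → ℝ := fun z => γ z.1 ⬝ᵥ v z.2 * v z.1 ⬝ᵥ o z.2 with hg
  have hgcont : Continuous g := H.continuous_dotProduct_velocity.mul
    ((H.continuous_velocity.comp continuous_fst).dotProduct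
      (H.continuous_center.comp continuous_snd))
  have hgneg : ∀ z ∈ incidences h γ o p q ∩ {z | g z ≤ 0}, g z < 0 := fun z ⟨hz, hgz⟩ =>
    lt_of_le_of_ne hgz (mul_ne_zero (H.dotProduct_velocity_ne_zero hnest hinj hz)
      (H.velocity_dotProduct_center_ne_zero hnest hz))
  by_contra! hbad
  obtain ⟨⟨s, u⟩, hz, hsign⟩ := exists_mem_mul_nonpos_of_isCompact H.continuous_incidence
    H.hasDerivAt_incidence_fst H.hasDerivAt_incidence_snd
    ((H.isCompact_incidences p q).inter_right (isClosed_le hgcont continuous_const))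
    ⟨(s, u), hz, hbad⟩ (fun z hz => sub_eq_zero.2 hz.1.1) fun z hz => by
      obtain ⟨⟨-, hpz, hlt, hzq⟩, -⟩ := id hz
      filter_upwards [continuousAt_fst.eventually_lt continuousAt_snd hlt,
        hgcont.continuousAt.eventually_lt_const (hgneg z hz)] with x hx hgx hle₁ hle₂ hfx
      exact ⟨⟨sub_eq_zero.1 hfx, hpz.trans hle₁, hx, hle₂.trans hzq⟩, hgx.le⟩
  refine hsign.not_gt ?_
  calc 0 < -(lam u * g (s, u)) :=
        neg_pos.2 (mul_neg_of_pos_of_neg (H.lam_pos u) (hgneg _ hz))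
    _ = v s ⬝ᵥ o u * (-lam u * γ s ⬝ᵥ v u) := by simp only [hg]; ring

theorem exists_incidence_at_end (H : IsTangentCircleFamily h γ v w o lam)
    (hnest : IsNestedOn h γ o p q) (hinj : InjOn γ (Icc p q)) (hz : (s, u) ∈ incidences h γ o p q)
    (hbad : γ s ⬝ᵥ v u ≤ 0) :
    ∃ r ∈ Ico p q, γ r ⬝ᵥ o q = h ∧ γ r ⬝ᵥ v q < 0 := by
  have hneg : ∀ z ∈ incidences h γ o p q ∩ {z | γ z.1 ⬝ᵥ v z.2 ≤ 0}, γ z.1 ⬝ᵥ v z.2 < 0 :=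
    fun z ⟨hz, hle⟩ => lt_of_le_of_ne hle (H.dotProduct_velocity_ne_zero hnest hinj hz)
  by_contra! hend
  obtain ⟨⟨s, u⟩, hz, hsign⟩ := exists_mem_mul_nonneg_of_isCompact H.continuous_incidence
    H.hasDerivAt_incidence_fst H.hasDerivAt_incidence_snd
    ((H.isCompact_incidences p q).inter_right
      (isClosed_le H.continuous_dotProduct_velocity continuous_const))
    ⟨(s, u), hz, hbad⟩ (fun z hz => sub_eq_zero.2 hz.1.1) fun z hz => by
      obtain ⟨⟨hheight, hpz, hlt, hzq⟩, -⟩ := id hz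
      have hzq' : z.2 < q := hzq.lt_of_ne fun heq => (hneg z hz).not_ge
        (heq ▸ hend z.1 ⟨hpz, hlt.trans_le hzq⟩ (heq ▸ hheight))
      filter_upwards [continuousAt_fst.eventually_lt continuousAt_snd hlt,
        continuousAt_snd.eventually_lt_const hzq',
        H.continuous_dotProduct_velocity.continuousAt.eventually_lt_const (hneg z hz)]
        with x hx hxq hvx hle hfx
      exact ⟨⟨sub_eq_zero.1 hfx, hpz.trans hle.1, hx, hxq.le⟩, hvx.le⟩
  dsimp only at hsign
  linarith [mul_pos (H.lam_pos u) (H.dotProduct_velocity_mul_pos hnest hinj hz.1)]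

end IsTangentCircleFamily

end TangentCircles

section Meridians

variable {O a b v o : Fin 3 → ℝ} {h r x y : ℝ}

/-- The points `a` and `b` of the unit sphere lie on a common meridian issuing from `O`. -/
def SameMeridian (O a b : Fin 3 → ℝ) : Prop :=
  O ⬝ᵥ a ⨯₃ b = 0 ∧ 0 ≤ a ⬝ᵥ b - O ⬝ᵥ a * O ⬝ᵥ b

theorem sq_dotProduct_lt_one (hO : O ⬝ᵥ O = 1) (ha : a ⬝ᵥ a = 1) (hturn : O ⬝ᵥ a ⨯₃ v ≠ 0) :
    (O ⬝ᵥ a) ^ 2 < 1 := by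
  have hne : O ≠ a := by
    rintro rfl
    exact hturn (dot_self_cross O v)
  have hne' : O ≠ -a := by
    rintro rfl
    rw [neg_dotProduct, dot_self_cross, neg_zero] at hturn
    exact hturn rfl
  have hlt := dotProduct_lt_one hO ha hne
  have hlt' := dotProduct_lt_one hO (by simpa using ha) hne'
  rw [dotProduct_neg] at hlt'
  nlinarith

theorem SameMeridian.dotProduct_sub_pos (hab : SameMeridian O a b) (hO : O ⬝ᵥ O = 1)
    (ha : a ⬝ᵥ a = 1) (hb : b ⬝ᵥ b = 1) (hOa : (O ⬝ᵥ a) ^ 2 < 1) (hOb : (O ⬝ᵥ b) ^ 2 < 1) :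
    0 < a ⬝ᵥ b - O ⬝ᵥ a * O ⬝ᵥ b := by
  have hgram := one_sub_sq_mul_one_sub_sq hO ha hb
  rw [hab.1] at hgram
  refine hab.2.lt_of_ne fun h0 => ?_
  rw [← h0] at hgram
  nlinarith [mul_pos (sub_pos.2 hOa) (sub_pos.2 hOb)]

theorem SameMeridian.exists_eq (hab : SameMeridian O a b) (hO : O ⬝ᵥ O = 1) (ha : a ⬝ᵥ a = 1)
    (hb : b ⬝ᵥ b = 1) (hOa : (O ⬝ᵥ a) ^ 2 < 1) (hOb : (O ⬝ᵥ b) ^ 2 < 1) :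
    ∃ r > 0, b = (O ⬝ᵥ b - r * O ⬝ᵥ a) • O + r • a ∧
      r ^ 2 * (1 - (O ⬝ᵥ a) ^ 2) = 1 - (O ⬝ᵥ b) ^ 2 := by
  have hApos := hab.dotProduct_sub_pos hO ha hb hOa hOb
  have hgram := one_sub_sq_mul_one_sub_sq hO ha hb
  rw [hab.1] at hgram
  set A := a ⬝ᵥ b - O ⬝ᵥ a * O ⬝ᵥ b with hA
  have hPa : 0 < 1 - (O ⬝ᵥ a) ^ 2 := sub_pos.2 hOa
  set r := A / (1 - (O ⬝ᵥ a) ^ 2)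
  have hr : r * (1 - (O ⬝ᵥ a) ^ 2) = A := div_mul_cancel₀ _ hPa.ne'
  have hr2 : r ^ 2 * (1 - (O ⬝ᵥ a) ^ 2) = 1 - (O ⬝ᵥ b) ^ 2 := by
    refine mul_right_cancel₀ hPa.ne' ?_
    linear_combination (r * (1 - (O ⬝ᵥ a) ^ 2) + A) * hr - hgram
  refine ⟨r, div_pos hApos hPa, sub_eq_zero.1 (dotProduct_self_eq_zero.1 ?_), hr2⟩
  simp only [sub_dotProduct, dotProduct_sub, add_dotProduct, dotProduct_add, smul_dotProduct,
    dotProduct_smul, smul_eq_mul, dotProduct_comm b a, dotProduct_comm b O, dotProduct_comm a O,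
    hO, ha, hb]
  linear_combination -hr2 + 2 * r * (hr - hA)

theorem lt_one_sub_and_lt_one_add (hx : x ^ 2 < 1) (hy : y ^ 2 < 1) (hr : 0 < r) (hxy : x < y)
    (hrxy : r ^ 2 * (1 - x ^ 2) = 1 - y ^ 2) : 1 - y < r * (1 - x) ∧ r * (1 + x) < 1 + y := by
  obtain ⟨hx₁, hx₂⟩ := abs_lt.1 ((sq_lt_one_iff_abs_lt_one x).1 hx)
  obtain ⟨hy₁, -⟩ := abs_lt.1 ((sq_lt_one_iff_abs_lt_one y).1 hy)
  have hprod : r * (1 - x) * (r * (1 + x)) = (1 - y) * (1 + y) := by linear_combination hrxy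
  rcases le_total 1 r with h1 | h1
  · have hlt : 1 - y < r * (1 - x) :=
      (sub_lt_sub_left hxy 1).trans_le (le_mul_of_one_le_left (sub_pos.2 hx₂).le h1)
    refine ⟨hlt, lt_of_mul_lt_mul_left ?_ (mul_pos hr (sub_pos.2 hx₂)).le⟩
    exact hprod.trans_lt (mul_lt_mul_of_pos_right hlt (neg_lt_iff_pos_add'.1 hy₁))
  · have hlt : r * (1 + x) < 1 + y :=
      (mul_le_of_le_one_left (neg_lt_iff_pos_add'.1 hx₁).le h1).trans_lt (add_lt_add_right hxy 1)
    refine ⟨lt_of_mul_lt_mul_right ?_ (neg_lt_iff_pos_add'.1 hy₁).le, hlt⟩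
    exact hprod.symm.trans_lt (mul_lt_mul_of_pos_left hlt (mul_pos hr (sub_pos.2 hx₂)))

theorem lt_dotProduct_of_closer (hx : x ^ 2 < 1) (hy : y ^ 2 < 1) (hr : 0 < r) (hxy : x < y)
    (hrxy : r ^ 2 * (1 - x ^ 2) = 1 - y ^ 2) (hh : 0 < h) (hOo : h < O ⬝ᵥ o) (hao : h ≤ a ⬝ᵥ o) :
    h < ((y - r * x) • O + r • a) ⬝ᵥ o := by
  obtain ⟨hlt₁, hlt₂⟩ := lt_one_sub_and_lt_one_add hx hy hr hxy hrxy
  simp only [add_dotProduct, smul_dotProduct, smul_eq_mul]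
  calc h < (y - r * x) * h + r * h := by nlinarith
    _ ≤ (y - r * x) * O ⬝ᵥ o + r * a ⬝ᵥ o := by
      gcongr
      nlinarith [abs_lt.1 ((sq_lt_one_iff_abs_lt_one x).1 hx),
        abs_lt.1 ((sq_lt_one_iff_abs_lt_one y).1 hy)]

theorem dotProduct_self_mul_dotProduct_cross {e : Fin 3 → ℝ} (he : O ⬝ᵥ e = 0)
    (a b : Fin 3 → ℝ) :
    e ⬝ᵥ e * O ⬝ᵥ a ⨯₃ b = a ⬝ᵥ e * b ⬝ᵥ O ⨯₃ e - a ⬝ᵥ O ⨯₃ e * b ⬝ᵥ e := by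
  have hexpand : e ⬝ᵥ e * O ⬝ᵥ a ⨯₃ b =
      a ⬝ᵥ e * b ⬝ᵥ O ⨯₃ e - a ⬝ᵥ O ⨯₃ e * b ⬝ᵥ e + O ⬝ᵥ e * e ⬝ᵥ a ⨯₃ b := by
    simp only [vec3_dotProduct, cross_apply, cons_val]
    ring
  rw [hexpand, he, zero_mul, add_zero]

theorem sameMeridian_of_neg_side {e : Fin 3 → ℝ} (hO : O ⬝ᵥ O = 1) (hb : b ⬝ᵥ b = 1)
    (hcop : O ⬝ᵥ a ⨯₃ b = 0) (hae : a ⬝ᵥ O ⨯₃ e ≤ 0) (hbe : b ⬝ᵥ O ⨯₃ e < 0) :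
    SameMeridian O a b := by
  have hnormal : O ⬝ᵥ O ⨯₃ e = 0 := dot_self_cross O e
  have hbound : 0 ≤ 1 - (O ⬝ᵥ b) ^ 2 := by
    have h₁ := dotProduct_le_one hO hb
    have h₂ := dotProduct_le_one hO (b := -b) (by simpa using hb)
    rw [dotProduct_neg] at h₂
    nlinarith
  have hidentity : (b ⬝ᵥ O ⨯₃ e) ^ 2 * (a ⬝ᵥ b - O ⬝ᵥ a * O ⬝ᵥ b) =
      a ⬝ᵥ O ⨯₃ e * b ⬝ᵥ O ⨯₃ e * (1 - (O ⬝ᵥ b) ^ 2) := by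
    have h := dotProduct_cross_mul_dotProduct_cross O a b (O ⨯₃ e)
    rw [hcop, hO, hb, hnormal, dotProduct_comm (O ⨯₃ e) b] at h
    linear_combination b ⬝ᵥ O ⨯₃ e * h
  refine ⟨hcop, nonneg_of_mul_nonneg_right (hidentity ▸ ?_) (sq_pos_of_neg hbe)⟩
  exact mul_nonneg (mul_nonneg_of_nonpos_of_nonpos hae hbe.le) hbound

end Meridians

section TurningArcs

/-- A curve `γ` on the unit sphere with velocity `v` that turns counterclockwise about the point `O`
of the unit sphere during `S`. -/
structure IsTurningOn (O : Fin 3 → ℝ) (γ v : ℝ → Fin 3 → ℝ) (S : Set ℝ) : Prop where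
  sphere_center : O ⬝ᵥ O = 1
  hasDerivAt : ∀ s, HasDerivAt γ (v s) s
  sphere : ∀ s, γ s ⬝ᵥ γ s = 1
  turn_pos : ∀ s ∈ S, 0 < O ⬝ᵥ γ s ⨯₃ v s

/-- The pairs `(s, x)` in `I ×ˢ J` for which `α s` and `β x` lie on a common meridian issuing from
`O`, with `β x` at least as close to `O` as `α s`. -/
def closerPairs (O : Fin 3 → ℝ) (α β : ℝ → Fin 3 → ℝ) (I J : Set ℝ) : Set (ℝ × ℝ) :=
  (I ×ˢ J) ∩ {z | SameMeridian O (α z.1) (β z.2) ∧ O ⬝ᵥ α z.1 ≤ O ⬝ᵥ β z.2}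

namespace IsTurningOn

variable {O o : Fin 3 → ℝ} {γ v α α' β β' : ℝ → Fin 3 → ℝ} {S S' T : Set ℝ}
  {h s x s₀ b x₀ c : ℝ}

theorem mono (H : IsTurningOn O γ v S) (hS : S' ⊆ S) : IsTurningOn O γ v S' :=
  ⟨H.sphere_center, H.hasDerivAt, H.sphere, fun s hs => H.turn_pos s (hS hs)⟩

theorem continuous (H : IsTurningOn O γ v S) : Continuous γ :=
  continuous_iff_continuousAt.2 fun s => (H.hasDerivAt s).continuousAt

theorem sq_dotProduct_lt_one (H : IsTurningOn O γ v S) (hs : s ∈ S) : (O ⬝ᵥ γ s) ^ 2 < 1 :=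
  _root_.sq_dotProduct_lt_one H.sphere_center (H.sphere s) (H.turn_pos s hs).ne'

theorem exists_eq_of_sameMeridian (Hα : IsTurningOn O α α' S)
    (Hβ : IsTurningOn O β β' T) (hs : s ∈ S) (hx : x ∈ T) (hm : SameMeridian O (α s) (β x)) :
    ∃ r > 0, β x = (O ⬝ᵥ β x - r * O ⬝ᵥ α s) • O + r • α s ∧
      r ^ 2 * (1 - (O ⬝ᵥ α s) ^ 2) = 1 - (O ⬝ᵥ β x) ^ 2 :=
  hm.exists_eq Hα.sphere_center (Hα.sphere s) (Hβ.sphere x) (Hα.sq_dotProduct_lt_one hs)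
    (Hβ.sq_dotProduct_lt_one hx)

theorem turn_mul_turn_neg (Hα : IsTurningOn O α α' S) (Hβ : IsTurningOn O β β' T)
    (hs : s ∈ S) (hx : x ∈ T) (hm : SameMeridian O (α s) (β x)) :
    O ⬝ᵥ α' s ⨯₃ β x * O ⬝ᵥ α s ⨯₃ β' x < 0 := by
  obtain ⟨r, hr, hβ, -⟩ := Hα.exists_eq_of_sameMeridian Hβ hs hx hm
  set k := O ⬝ᵥ β x - r * O ⬝ᵥ α s
  have hleft : O ⬝ᵥ α' s ⨯₃ β x = -(r * O ⬝ᵥ α s ⨯₃ α' s) := by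
    rw [hβ, map_add, map_smul, map_smul, dotProduct_add, dotProduct_smul, dotProduct_smul,
      dot_cross_self, ← neg_cross, dotProduct_neg, smul_zero, zero_add, smul_eq_mul, mul_neg]
  have hright : O ⬝ᵥ β x ⨯₃ β' x = r * O ⬝ᵥ α s ⨯₃ β' x := by
    conv_lhs => rw [hβ]
    simp only [map_add, map_smul, LinearMap.add_apply, LinearMap.smul_apply, dotProduct_add,
      dotProduct_smul, dot_self_cross, smul_eq_mul, mul_zero, zero_add]
  have hαpos := Hα.turn_pos s hs
  have hβpos := Hβ.turn_pos x hx
  rw [hright] at hβpos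
  rw [hleft]
  exact mul_neg_of_neg_of_pos (neg_neg_of_pos (mul_pos hr hαpos)) (pos_of_mul_pos_right hβpos hr.le)

theorem dotProduct_lt_of_sameMeridian (Hα : IsTurningOn O α α' S)
    (Hβ : IsTurningOn O β β' T) (hs : s ∈ S) (hx : x ∈ T) (hm : SameMeridian O (α s) (β x))
    (hne : α s ≠ β x) (hle : O ⬝ᵥ α s ≤ O ⬝ᵥ β x) : O ⬝ᵥ α s < O ⬝ᵥ β x := by
  obtain ⟨r, hr, hβ, hr2⟩ := Hα.exists_eq_of_sameMeridian Hβ hs hx hm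
  refine hle.lt_of_ne fun heq => hne ?_
  have hpos := sub_pos.2 (Hβ.sq_dotProduct_lt_one hx)
  rw [heq] at hr2
  have hr1 : r = 1 := (pow_eq_one_iff_of_nonneg hr.le two_ne_zero).1
    (mul_right_cancel₀ hpos.ne' (by rw [hr2, one_mul]))
  rw [hβ, hr1, heq, one_mul, sub_self, zero_smul, zero_add, one_smul]

theorem isCompact_closerPairs (hα : Continuous α) (hβ : Continuous β) (O : Fin 3 → ℝ)
    (s₀ b x₀ c : ℝ) : IsCompact (closerPairs O α β (Icc s₀ b) (Icc x₀ c)) := by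
  have hα₁ : Continuous fun z : ℝ × ℝ => α z.1 := hα.comp continuous_fst
  have hβ₂ : Continuous fun z : ℝ × ℝ => β z.2 := hβ.comp continuous_snd
  have hOα : Continuous fun z : ℝ × ℝ => O ⬝ᵥ α z.1 := continuous_const.dotProduct hα₁
  have hOβ : Continuous fun z : ℝ × ℝ => O ⬝ᵥ β z.2 := continuous_const.dotProduct hβ₂
  exact (isCompact_Icc.prod isCompact_Icc).inter_right
    (((isClosed_eq (continuous_const.dotProduct (continuous_cross hα₁ hβ₂)) continuous_const).inter
      (isClosed_le continuous_const ((hα₁.dotProduct hβ₂).sub (hOα.mul hOβ)))).inter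
        (isClosed_le hOα hOβ))

theorem eventually_mem_closerPairs (Hα : IsTurningOn O α α' S) (Hβ : IsTurningOn O β β' T)
    (hsS : s ∈ S) (hxT : x ∈ T) (hm : SameMeridian O (α s) (β x)) (hlt : O ⬝ᵥ α s < O ⬝ᵥ β x)
    (hs : s ∈ Ico s₀ b) (hx : x ∈ Ico x₀ c) :
    ∀ᶠ z in 𝓝 (s, x), (s, x) ≤ z → O ⬝ᵥ α z.1 ⨯₃ β z.2 = 0 →
      z ∈ closerPairs O α β (Icc s₀ b) (Icc x₀ c) := by
  have hα₁ : Continuous fun z : ℝ × ℝ => α z.1 := Hα.continuous.comp continuous_fst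
  have hβ₂ : Continuous fun z : ℝ × ℝ => β z.2 := Hβ.continuous.comp continuous_snd
  have hOα : Continuous fun z : ℝ × ℝ => O ⬝ᵥ α z.1 := continuous_const.dotProduct hα₁
  have hOβ : Continuous fun z : ℝ × ℝ => O ⬝ᵥ β z.2 := continuous_const.dotProduct hβ₂
  have hpos : ∀ᶠ z in 𝓝 (s, x), 0 < α z.1 ⬝ᵥ β z.2 - O ⬝ᵥ α z.1 * O ⬝ᵥ β z.2 :=
    ((hα₁.dotProduct hβ₂).sub (hOα.mul hOβ)).continuousAt.eventually_const_lt
      (hm.dotProduct_sub_pos Hα.sphere_center (Hα.sphere s) (Hβ.sphere x)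
        (Hα.sq_dotProduct_lt_one hsS) (Hβ.sq_dotProduct_lt_one hxT))
  have hcloser : ∀ᶠ z in 𝓝 (s, x), O ⬝ᵥ α z.1 < O ⬝ᵥ β z.2 :=
    hOα.continuousAt.eventually_lt hOβ.continuousAt hlt
  filter_upwards [hpos, hcloser, continuousAt_fst.eventually_lt_const hs.2,
    continuousAt_snd.eventually_lt_const hx.2] with z hz hzlt hzb hzc hle hz0
  exact ⟨⟨⟨hs.1.trans hle.1, hzb.le⟩, hx.1.trans hle.2, hzc.le⟩, ⟨hz0, hz.le⟩, hzlt.le⟩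

theorem lt_of_mem_closerPairs (Hα : IsTurningOn O α α' (Ico s₀ b))
    (Hβ : IsTurningOn O β β' (Icc x₀ c)) (hαb : α b = O)
    (hdisj : ∀ s ∈ Ico s₀ b, ∀ x ∈ Icc x₀ c, α s ≠ β x) (hh : 0 < h) (hOo : h < O ⬝ᵥ o)
    (hαo : ∀ s ∈ Ico s₀ b, h ≤ α s ⬝ᵥ o) (hβo : β c ⬝ᵥ o ≤ h)
    (hsx : (s, x) ∈ closerPairs O α β (Icc s₀ b) (Icc x₀ c)) :
    s < b ∧ x < c ∧ O ⬝ᵥ α s < O ⬝ᵥ β x := by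
  obtain ⟨⟨⟨hs₀, hsb⟩, hx⟩, hm, hle⟩ := hsx
  dsimp only at hs₀ hsb hx hm hle
  have hsb : s < b := hsb.lt_of_ne fun heq => by
    rw [heq, hαb, Hα.sphere_center] at hle
    nlinarith [Hβ.sq_dotProduct_lt_one hx]
  have hs : s ∈ Ico s₀ b := ⟨hs₀, hsb⟩
  have hlt := Hα.dotProduct_lt_of_sameMeridian Hβ hs hx hm (hdisj s hs x hx) hle
  refine ⟨hsb, hx.2.lt_of_ne fun heq => ?_, hlt⟩
  obtain ⟨r, hr, hβ, hr2⟩ := Hα.exists_eq_of_sameMeridian Hβ hs hx hm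
  have hin := lt_dotProduct_of_closer (Hα.sq_dotProduct_lt_one hs) (Hβ.sq_dotProduct_lt_one hx)
    hr hlt hr2 hh hOo (hαo s hs)
  rw [← hβ, heq] at hin
  exact hin.not_ge hβo

/- Otherwise take a maximal pair `(s, x)` on a common meridian with `β x` at least as close to `O`
as `α s`: both arcs turn the same way, so the pair could be pushed further along both of them. -/
theorem lt_dotProduct_of_sameMeridian (Hα : IsTurningOn O α α' (Ico s₀ b))
    (Hβ : IsTurningOn O β β' (Icc x₀ c)) (hαb : α b = O)
    (hdisj : ∀ s ∈ Ico s₀ b, ∀ x ∈ Icc x₀ c, α s ≠ β x) (hh : 0 < h) (hOo : h < O ⬝ᵥ o)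
    (hαo : ∀ s ∈ Ico s₀ b, h ≤ α s ⬝ᵥ o) (hβo : β c ⬝ᵥ o ≤ h) (hs : s ∈ Icc s₀ b)
    (hx : x ∈ Icc x₀ c) (hm : SameMeridian O (α s) (β x)) : O ⬝ᵥ β x < O ⬝ᵥ α s := by
  by_contra! hle
  have hlt {s x : ℝ} (hsx : (s, x) ∈ closerPairs O α β (Icc s₀ b) (Icc x₀ c)) :=
    Hα.lt_of_mem_closerPairs Hβ hαb hdisj hh hOo hαo hβo hsx
  have hcross : Continuous fun z : ℝ × ℝ => O ⬝ᵥ α z.1 ⨯₃ β z.2 :=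
    continuous_const.dotProduct (continuous_cross (Hα.continuous.comp continuous_fst)
      (Hβ.continuous.comp continuous_snd))
  have hα' (z : ℝ × ℝ) : HasDerivAt (fun s => α s ⨯₃ β z.2) (α' z.1 ⨯₃ β z.2) z.1 := by
    simpa using hasDerivAt_cross (Hα.hasDerivAt z.1) (hasDerivAt_const z.1 (β z.2))
  have hβ' (z : ℝ × ℝ) : HasDerivAt (fun x => α z.1 ⨯₃ β x) (α z.1 ⨯₃ β' z.2) z.2 := by
    simpa using hasDerivAt_cross (hasDerivAt_const z.2 (α z.1)) (Hβ.hasDerivAt z.2)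
  obtain ⟨⟨s, x⟩, hz, hsign⟩ := exists_mem_mul_nonneg_of_isCompact hcross
    (fun z => hasDerivAt_const_dotProduct (hα' z) O)
    (fun z => hasDerivAt_const_dotProduct (hβ' z) O)
    (isCompact_closerPairs Hα.continuous Hβ.continuous O s₀ b x₀ c) ⟨(s, x), ⟨hs, hx⟩, hm, hle⟩
    (fun z hz => hz.2.1.1) fun z hz =>
      have hs : z.1 ∈ Ico s₀ b := ⟨hz.1.1.1, (hlt hz).1⟩
      Hα.eventually_mem_closerPairs Hβ hs hz.1.2 hz.2.1 (hlt hz).2.2 hs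
        ⟨hz.1.2.1, (hlt hz).2.1⟩
  exact hsign.not_gt (Hα.turn_mul_turn_neg Hβ ⟨hz.1.1.1, (hlt hz).1⟩ hz.1.2 hz.2.1)

end IsTurningOn

end TurningArcs

section Sides

namespace IsTurningOn

variable {O e p : Fin 3 → ℝ} {α α' β : ℝ → Fin 3 → ℝ} {s₁ s₃ s₄ m r a b c s : ℝ} {S : Set ℝ}

theorem dotProduct_normal_mul_pos (H : IsTurningOn O α α' S) (he : O ⬝ᵥ e = 0) (he0 : e ≠ 0)
    (hs : s ∈ S) (hz : α s ⬝ᵥ O ⨯₃ e = 0) : 0 < α s ⬝ᵥ e * α' s ⬝ᵥ O ⨯₃ e := by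
  have hpos := mul_pos (dotProduct_self_pos he0) (H.turn_pos s hs)
  rwa [dotProduct_self_mul_dotProduct_cross he, hz, zero_mul, sub_zero] at hpos

theorem exists_crossing_interval (H : IsTurningOn O α α' (Ico s₁ b)) (he : O ⬝ᵥ e = 0)
    (he0 : e ≠ 0) (hs₁ : 0 < α s₁ ⬝ᵥ O ⨯₃ e) (hm : m ∈ Ico s₁ b) (hneg : α m ⬝ᵥ O ⨯₃ e < 0)
    (hr : r ∈ Ioo m b) (hpos : 0 < α r ⬝ᵥ O ⨯₃ e) :
    ∃ s₃ s₄, s₃ ≤ s₄ ∧ Icc s₃ s₄ ⊆ Ico s₁ b ∧ (∀ s ∈ Icc s₃ s₄, α s ⬝ᵥ O ⨯₃ e ≤ 0) ∧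
      α s₃ ⬝ᵥ O ⨯₃ e = 0 ∧ α s₃ ⬝ᵥ e ≤ 0 ∧ α s₄ ⬝ᵥ O ⨯₃ e = 0 ∧ 0 ≤ α s₄ ⬝ᵥ e := by
  have hderiv : ∀ s, HasDerivAt (fun s => α s ⬝ᵥ O ⨯₃ e) (α' s ⬝ᵥ O ⨯₃ e) s := fun s =>
    hasDerivAt_dotProduct_const (H.hasDerivAt s) _
  have hsm : s₁ < m := hm.1.lt_of_ne fun heq => hneg.not_gt (heq ▸ hs₁)
  obtain ⟨s₃, hs₃, hz₃, hd₃, hneg₃⟩ := exists_last_zero_of_pos_of_neg hderiv hsm hs₁ hneg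
  obtain ⟨s₄, hs₄, hz₄, hd₄, hneg₄⟩ := exists_first_zero_of_neg_of_pos hderiv hr.1 hneg hpos
  have hlt : s₃ < s₄ := hs₃.2.trans hs₄.1
  have hsub : Icc s₃ s₄ ⊆ Ico s₁ b := fun s hs =>
    ⟨hs₃.1.le.trans hs.1, hs.2.trans_lt (hs₄.2.trans hr.2)⟩
  refine ⟨s₃, s₄, hlt.le, hsub, fun s hs => ?_, hz₃, ?_, hz₄, ?_⟩
  · rcases hs.1.eq_or_lt with rfl | hs₃s
    · exact hz₃.le
    rcases hs.2.eq_or_lt with rfl | hss₄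
    · exact hz₄.le
    rcases le_total s m with hsm | hms
    · exact (hneg₃ s ⟨hs₃s, hsm⟩).le
    · exact (hneg₄ s ⟨hms, hss₄⟩).le
  · have := H.dotProduct_normal_mul_pos he he0 (hsub (left_mem_Icc.2 hlt.le)) hz₃
    exact (neg_of_mul_pos_left this hd₃).le
  · have := H.dotProduct_normal_mul_pos he he0 (hsub (right_mem_Icc.2 hlt.le)) hz₄
    exact (pos_of_mul_pos_left this hd₄).le

theorem exists_sameMeridian_of_neg_side (H : IsTurningOn O α α' S) (he : O ⬝ᵥ e = 0)
    (he0 : e ≠ 0) (hle : s₃ ≤ s₄) (hside : ∀ s ∈ Icc s₃ s₄, α s ⬝ᵥ O ⨯₃ e ≤ 0)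
    (hz₃ : α s₃ ⬝ᵥ O ⨯₃ e = 0) (he₃ : α s₃ ⬝ᵥ e ≤ 0) (hz₄ : α s₄ ⬝ᵥ O ⨯₃ e = 0)
    (he₄ : 0 ≤ α s₄ ⬝ᵥ e) (hp : p ⬝ᵥ p = 1) (hpneg : p ⬝ᵥ O ⨯₃ e < 0) :
    ∃ s ∈ Icc s₃ s₄, SameMeridian O (α s) p := by
  have hcont : Continuous fun s => e ⬝ᵥ e * O ⬝ᵥ α s ⨯₃ p :=
    continuous_const.mul (continuous_const.dotProduct (continuous_cross H.continuous
      continuous_const))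
  obtain ⟨s, hs, hzero⟩ := intermediate_value_Icc' hle hcont.continuousOn
    (show (0 : ℝ) ∈ Icc _ _ by
      simp only [dotProduct_self_mul_dotProduct_cross he, hz₃, hz₄, zero_mul, sub_zero]
      exact ⟨mul_nonpos_of_nonneg_of_nonpos he₄ hpneg.le,
        mul_nonneg_of_nonpos_of_nonpos he₃ hpneg.le⟩)
  have hcop := (mul_eq_zero.1 hzero).resolve_left (dotProduct_self_pos he0).ne'
  exact ⟨s, hs, sameMeridian_of_neg_side H.sphere_center hp hcop (hside s hs) hpneg⟩

/- Were `α` to enter the negative side, it would there sweep across every meridian, in particular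
across that of a point `β x` so close to `O` that it violates the barrier. -/
theorem dotProduct_normal_nonneg (H : IsTurningOn O α α' (Ico s₁ b)) (he : O ⬝ᵥ e = 0)
    (he0 : e ≠ 0) (hβ : ∀ x, β x ⬝ᵥ β x = 1) {β'a : Fin 3 → ℝ} (hβ' : HasDerivAt β β'a a)
    (hβa : β a = O) (hβneg : β'a ⬝ᵥ O ⨯₃ e < 0) (hac : a < c)
    (hbarrier : ∀ s ∈ Ico s₁ b, ∀ x ∈ Ioc a c, SameMeridian O (α s) (β x) → O ⬝ᵥ β x < O ⬝ᵥ α s)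
    (hstart : 0 < α s₁ ⬝ᵥ O ⨯₃ e) (hend : ∃ᶠ r in 𝓝[<] b, 0 < α r ⬝ᵥ O ⨯₃ e) :
    ∀ s ∈ Ico s₁ b, 0 ≤ α s ⬝ᵥ O ⨯₃ e := by
  intro m hm
  by_contra! hneg
  obtain ⟨r, hpos, hr⟩ := (hend.and_eventually (Ioo_mem_nhdsLT hm.2)).exists
  obtain ⟨s₃, s₄, hle, hsub, hside, hz₃, he₃, hz₄, he₄⟩ :=
    H.exists_crossing_interval he he0 hstart hm hneg hr hpos
  obtain ⟨y, hy, hmax⟩ := isCompact_Icc.exists_isMaxOn (nonempty_Icc.2 hle)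
    (continuous_const.dotProduct H.continuous : Continuous fun s => O ⬝ᵥ α s).continuousOn
  have hylt : O ⬝ᵥ α y < O ⬝ᵥ β a := by
    rw [hβa, H.sphere_center]
    nlinarith [H.sq_dotProduct_lt_one (hsub hy)]
  have hclose : ∀ᶠ x in 𝓝[>] a, O ⬝ᵥ α y < O ⬝ᵥ β x := nhdsWithin_le_nhds
    ((hasDerivAt_const_dotProduct hβ' O).continuousAt.eventually_const_lt hylt)
  have hnegside : ∀ᶠ x in 𝓝[>] a, β x ⬝ᵥ O ⨯₃ e < 0 :=
    eventually_nhdsGT_neg_of_hasDerivAt_neg (hasDerivAt_dotProduct_const hβ' _)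
      (by rw [hβa, dot_self_cross]) hβneg
  obtain ⟨x, ⟨hyx, hxneg⟩, hx⟩ := ((hclose.and hnegside).and (Ioc_mem_nhdsGT hac)).exists
  obtain ⟨s, hs, hm⟩ :=
    H.exists_sameMeridian_of_neg_side he he0 hle hside hz₃ he₃ hz₄ he₄ (hβ x) hxneg
  exact ((hbarrier s (hsub hs) x hx hm).trans_le (hmax hs)).not_gt hyx

theorem dotProduct_normal_pos_of_nonneg (H : IsTurningOn O α α' (Ico s₁ b)) (he : O ⬝ᵥ e = 0)
    (he0 : e ≠ 0) (hstart : 0 < α s₁ ⬝ᵥ O ⨯₃ e) (hnonneg : ∀ s ∈ Ico s₁ b, 0 ≤ α s ⬝ᵥ O ⨯₃ e) :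
    ∀ s ∈ Ico s₁ b, 0 < α s ⬝ᵥ O ⨯₃ e := by
  intro s hs
  refine (hnonneg s hs).lt_of_ne fun hz => ?_
  have hlt : s₁ < s := hs.1.lt_of_ne fun heq => hstart.ne (heq ▸ hz)
  have hmin : IsLocalMin (fun s => α s ⬝ᵥ O ⨯₃ e) s := by
    filter_upwards [Ioo_mem_nhds hlt hs.2] with x hx
    exact hz ▸ hnonneg x (Ioo_subset_Ico_self hx)
  have hpos := H.dotProduct_normal_mul_pos he he0 hs hz.symm
  rw [hmin.hasDerivAt_eq_zero (hasDerivAt_dotProduct_const (H.hasDerivAt s) _), mul_zero] at hpos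
  exact hpos.false

/- The quotient is minus the tangent of the longitude of `α s`, measured from `O ⨯₃ e`. -/
theorem strictAntiOn_div_normal (H : IsTurningOn O α α' (Ico s₁ b)) (he : O ⬝ᵥ e = 0)
    (he0 : e ≠ 0) (hpos : ∀ s ∈ Ico s₁ b, 0 < α s ⬝ᵥ O ⨯₃ e) :
    StrictAntiOn (fun s => α s ⬝ᵥ e / α s ⬝ᵥ O ⨯₃ e) (Ico s₁ b) := by
  have hderiv : ∀ s ∈ Ico s₁ b, HasDerivAt (fun s => α s ⬝ᵥ e / α s ⬝ᵥ O ⨯₃ e)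
      ((α' s ⬝ᵥ e * α s ⬝ᵥ O ⨯₃ e - α s ⬝ᵥ e * α' s ⬝ᵥ O ⨯₃ e) / (α s ⬝ᵥ O ⨯₃ e) ^ 2) s :=
    fun s hs => (hasDerivAt_dotProduct_const (H.hasDerivAt s) e).fun_div
      (hasDerivAt_dotProduct_const (H.hasDerivAt s) _) (hpos s hs).ne'
  refine strictAntiOn_of_deriv_neg (convex_Ico s₁ b)
    (fun s hs => (hderiv s hs).continuousAt.continuousWithinAt) fun s hs => ?_
  have hs := interior_subset hs
  rw [(hderiv s hs).deriv]
  refine div_neg_of_neg_of_pos ?_ (pow_pos (hpos s hs) 2)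
  have hturn := mul_pos (dotProduct_self_pos he0) (H.turn_pos s hs)
  rw [dotProduct_self_mul_dotProduct_cross he] at hturn
  linarith

end IsTurningOn

end Sides

section InscribedShells

/-- A negative shell `γ|_{[a, b]}` whose tangent circles lie on the side of the normal `γ ⨯₃ v`,
inscribed in one of those circles: the circles of parameters `c` and `d` coincide, and the arcs
outside `[c, d]` lie inside of it. The factor `k` rescales `γ ⨯₃ v` in the formula for the
centers. -/
structure IsInscribedNegativeShell (h : ℝ) (γ v w o : ℝ → Fin 3 → ℝ) (lam k : ℝ → ℝ)
    (a c d b : ℝ) : Prop extends IsTangentCircleFamily h γ v w o lam where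
  scale_pos : ∀ s, 0 < k s
  center_eq : ∀ s, o s = h • γ s + k s • γ s ⨯₃ v s
  lt_left : a < c
  left_lt_right : c < d
  right_lt : d < b
  injOn : InjOn γ (Ico a b)
  closed : γ a = γ b
  negative : 0 < γ a ⬝ᵥ v a ⨯₃ v b
  center_left_eq_center_right : o c = o d
  inside_left : ∀ x ∈ Ico a c, h < γ x ⬝ᵥ o d
  inside_right : ∀ x ∈ Ioc d b, h < γ x ⬝ᵥ o d

namespace IsInscribedNegativeShell

variable {h : ℝ} {γ v w o : ℝ → Fin 3 → ℝ} {lam k : ℝ → ℝ} {a c d b s u x : ℝ} {y : Fin 3 → ℝ}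

theorem dotProduct_center (H : IsInscribedNegativeShell h γ v w o lam k a c d b)
    (y : Fin 3 → ℝ) (s : ℝ) : y ⬝ᵥ o s = h * y ⬝ᵥ γ s + k s * y ⬝ᵥ γ s ⨯₃ v s := by
  rw [H.center_eq, dotProduct_add, dotProduct_smul, dotProduct_smul, smul_eq_mul, smul_eq_mul]

theorem dotProduct_cross_pos (H : IsInscribedNegativeShell h γ v w o lam k a c d b)
    (hy : y ⬝ᵥ y = 1) (hin : h < y ⬝ᵥ o s) : 0 < y ⬝ᵥ γ s ⨯₃ v s := by
  rw [H.dotProduct_center] at hin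
  have hle := mul_le_of_le_one_right H.height_pos.le (dotProduct_le_one hy (H.sphere s))
  exact pos_of_mul_pos_right (by linarith) (H.scale_pos s).le

theorem dotProduct_center_cross (H : IsInscribedNegativeShell h γ v w o lam k a c d b)
    (y : Fin 3 → ℝ) (s : ℝ) : y ⬝ᵥ o s ⨯₃ γ s = k s * y ⬝ᵥ v s := by
  rw [H.center_eq, map_add, LinearMap.add_apply, map_smul, map_smul, LinearMap.smul_apply,
    LinearMap.smul_apply, cross_self, smul_zero, zero_add, cross_cross_eq_smul_sub_smul, H.sphere,
    H.velocity_dotProduct_self, one_smul, zero_smul, sub_zero, dotProduct_smul, smul_eq_mul]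

theorem ne_endpoint (H : IsInscribedNegativeShell h γ v w o lam k a c d b) (hs : s ∈ Ico d b) :
    γ s ≠ γ b := fun heq =>
  have has : a < s := (H.lt_left.trans H.left_lt_right).trans_le hs.1
  has.ne (H.injOn ⟨le_rfl, has.trans hs.2⟩ ⟨has.le, hs.2⟩ (H.closed.trans heq.symm))

theorem injOn_right (H : IsInscribedNegativeShell h γ v w o lam k a c d b) :
    InjOn γ (Icc d b) := by
  rw [← Ico_insert_right H.right_lt.le, injOn_insert (by simp)]
  refine ⟨H.injOn.mono (Ico_subset_Ico_left (H.lt_left.trans H.left_lt_right).le), ?_⟩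
  rintro ⟨s, hs, heq⟩
  exact H.ne_endpoint hs heq

theorem isNestedOn_right (H : IsInscribedNegativeShell h γ v w o lam k a c d b) :
    IsNestedOn h γ o d b :=
  H.isNestedOn H.injOn_right H.inside_right

theorem lt_dotProduct_center_left (H : IsInscribedNegativeShell h γ v w o lam k a c d b)
    (hx : x ∈ Ioc a c) : h < γ b ⬝ᵥ o x := by
  have hcb : c < b := H.left_lt_right.trans H.right_lt
  have hinj : InjOn (fun s => γ (-s)) (Icc (-c) (-a)) := fun s hs t ht heq =>
    neg_injective (H.injOn ⟨le_neg.1 hs.2, (neg_le.1 hs.1).trans_lt hcb⟩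
      ⟨le_neg.1 ht.2, (neg_le.1 ht.1).trans_lt hcb⟩ heq)
  have hnest := H.reverse.isNestedOn hinj fun s hs => by
    rw [neg_neg, H.center_left_eq_center_right]
    exact H.inside_left _ ⟨le_neg.1 hs.2, neg_lt.1 hs.1⟩
  simpa [H.closed] using hnest (neg_le_neg hx.2) (neg_lt_neg hx.1) le_rfl

theorem isTurningOn_left (H : IsInscribedNegativeShell h γ v w o lam k a c d b) :
    IsTurningOn (γ b) γ v (Ioc a c) :=
  ⟨H.sphere b, H.hasDerivAt, H.sphere, fun _ hs =>
    H.dotProduct_cross_pos (H.sphere b) (H.lt_dotProduct_center_left hs)⟩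

theorem isTurningOn_right (H : IsInscribedNegativeShell h γ v w o lam k a c d b) :
    IsTurningOn (γ b) γ v (Ico d b) :=
  ⟨H.sphere b, H.hasDerivAt, H.sphere, fun _ hs =>
    H.dotProduct_cross_pos (H.sphere b) (H.isNestedOn_right hs.1 hs.2 le_rfl)⟩

theorem le_dotProduct_center (H : IsInscribedNegativeShell h γ v w o lam k a c d b)
    (hs : s ∈ Icc d b) : h ≤ γ s ⬝ᵥ o d := by
  rcases hs.1.eq_or_lt with rfl | hds
  · exact (H.height d).ge
  · exact (H.inside_right s ⟨hds, hs.2⟩).le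

/- The arc `γ|_{[d, b)}` cannot reach the point `γ x` of the initial arc from outside: following
both arcs would lead beyond the circle in which the shell is inscribed. -/
theorem dotProduct_lt_of_sameMeridian (H : IsInscribedNegativeShell h γ v w o lam k a c d b)
    (hs : s ∈ Ico d b) (hx : x ∈ Ioc a c) (hm : SameMeridian (γ b) (γ s) (γ x)) :
    γ b ⬝ᵥ γ x < γ b ⬝ᵥ γ s := by
  refine H.isTurningOn_right.lt_dotProduct_of_sameMeridian (o := o d)
    (H.isTurningOn_left.mono fun y hy => ⟨hx.1.trans_le hy.1, hy.2⟩) rfl ?_ H.height_pos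
    (H.inside_right b ⟨H.right_lt, le_rfl⟩)
    (fun s hs => H.le_dotProduct_center (Ico_subset_Icc_self hs))
    (by rw [← H.center_left_eq_center_right, H.height]) (Ico_subset_Icc_self hs)
    ⟨le_rfl, hx.2⟩ hm
  intro s hs y hy heq
  have hys : y < s := hy.2.trans_lt (H.left_lt_right.trans_le hs.1)
  have hay : a ≤ y := hx.1.le.trans hy.1
  exact hys.ne' (H.injOn ⟨hay.trans hys.le, hs.2⟩ ⟨hay, hys.trans hs.2⟩ heq)

theorem dotProduct_normal_pos_of_le (H : IsInscribedNegativeShell h γ v w o lam k a c d b)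
    (hs : s ∈ Ico d b) (hle : h ≤ γ s ⬝ᵥ o b) : 0 < γ s ⬝ᵥ γ b ⨯₃ v b := by
  rw [H.dotProduct_center] at hle
  have hlt := mul_lt_of_lt_one_right H.height_pos
    (dotProduct_lt_one (H.sphere s) (H.sphere b) (H.ne_endpoint hs))
  exact pos_of_mul_pos_right (by linarith) (H.scale_pos b).le

theorem eventually_lt_dotProduct_center_end
    (H : IsInscribedNegativeShell h γ v w o lam k a c d b) :
    ∀ᶠ r in 𝓝[<] b, h < γ r ⬝ᵥ o b := by
  have hpair : Tendsto (fun r => (b, r)) (𝓝[<] b) (𝓝 (b, b)) :=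
    ((Continuous.prodMk_right b).tendsto b).mono_left nhdsWithin_le_nhds
  filter_upwards [hpair.eventually (H.eventually_lt_dotProduct_center b), self_mem_nhdsWithin]
    with r hr hrb
  exact hr (mem_Iio.1 hrb).ne'

theorem dotProduct_normal_pos (H : IsInscribedNegativeShell h γ v w o lam k a c d b)
    (hs : s ∈ Ico d b) (hle : h ≤ γ s ⬝ᵥ o b) : ∀ r ∈ Ico s b, 0 < γ r ⬝ᵥ γ b ⨯₃ v b := by
  have hturn : IsTurningOn (γ b) γ v (Ico s b) :=
    H.isTurningOn_right.mono (Ico_subset_Ico_left hs.1)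
  have hperp : γ b ⬝ᵥ v b = 0 := by rw [dotProduct_comm, H.velocity_dotProduct_self]
  have hstart := H.dotProduct_normal_pos_of_le hs hle
  have hend : ∃ᶠ r in 𝓝[<] b, 0 < γ r ⬝ᵥ γ b ⨯₃ v b := by
    refine Eventually.frequently ?_
    filter_upwards [H.eventually_lt_dotProduct_center_end, Ioo_mem_nhdsLT hs.2] with r hr hsr
    exact H.dotProduct_normal_pos_of_le ⟨hs.1.trans hsr.1.le, hsr.2⟩ hr.le
  have hnegative : v a ⬝ᵥ γ b ⨯₃ v b < 0 := by
    rw [← H.closed, triple_product_permutation, ← cross_anticomm, dotProduct_neg]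
    exact neg_neg_of_pos H.negative
  exact hturn.dotProduct_normal_pos_of_nonneg hperp (H.velocity_ne_zero b) hstart
    (hturn.dotProduct_normal_nonneg hperp (H.velocity_ne_zero b) H.sphere (H.hasDerivAt a)
      H.closed hnegative H.lt_left
      (fun r hr x hx => H.dotProduct_lt_of_sameMeridian ⟨hs.1.trans hr.1, hr.2⟩ hx) hstart hend)

/- An incidence on the wrong half could be pushed to the end of the shell. There `γ` leaves the last
circle and has to come back into it before `b`, on the other half of that circle, which is
incompatible with turning counterclockwise about `γ b`. -/
theorem dotProduct_velocity_pos (H : IsInscribedNegativeShell h γ v w o lam k a c d b)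
    (hds : d ≤ s) (hsu : s < u) (hub : u ≤ b) (hheight : γ s ⬝ᵥ o u = h) : 0 < γ s ⬝ᵥ v u := by
  by_contra! hbad
  obtain ⟨s₁, hs₁, hheight₁, hneg₁⟩ := H.exists_incidence_at_end H.isNestedOn_right H.injOn_right
    ⟨hheight, hds, hsu, hub⟩ hbad
  have hsign : ∀ r ∈ Ico d b, γ r ⬝ᵥ o b = h → 0 < γ r ⬝ᵥ v b * v r ⬝ᵥ o b := fun r hr hr₀ =>
    H.dotProduct_velocity_mul_pos H.isNestedOn_right H.injOn_right ⟨hr₀, hr.1, hr.2, le_rfl⟩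
  have hderiv : ∀ r, HasDerivAt (fun r => γ r ⬝ᵥ o b - h) (v r ⬝ᵥ o b) r := fun r =>
    (hasDerivAt_dotProduct_const (H.hasDerivAt r) _).sub_const h
  obtain ⟨m, hm, hs₁m⟩ := ((eventually_nhdsGT_neg_of_hasDerivAt_neg (hderiv s₁)
    (sub_eq_zero.2 hheight₁) (neg_of_mul_pos_right (hsign s₁ hs₁ hheight₁) hneg₁.le)).and
    (Ioo_mem_nhdsGT hs₁.2)).exists
  obtain ⟨r, hr, hmr⟩ :=
    (H.eventually_lt_dotProduct_center_end.and (Ioo_mem_nhdsLT hs₁m.2)).exists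
  obtain ⟨z, hz, hz₀, hvz, -⟩ :=
    exists_first_zero_of_neg_of_pos hderiv hmr.1 hm (sub_pos.2 hr)
  have hs₁z : s₁ < z := hs₁m.1.trans hz.1
  have hzb : z < b := hz.2.trans hmr.2
  have hpos : 0 < γ z ⬝ᵥ v b :=
    pos_of_mul_pos_left (hsign z ⟨hs₁.1.trans hs₁z.le, hzb⟩ (sub_eq_zero.1 hz₀)) hvz
  have hside := H.dotProduct_normal_pos hs₁ hheight₁.ge
  have hanti := (H.isTurningOn_right.mono (Ico_subset_Ico_left hs₁.1)).strictAntiOn_div_normal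
    (by rw [dotProduct_comm, H.velocity_dotProduct_self]) (H.velocity_ne_zero b) hside
    ⟨le_rfl, hs₁.2⟩ ⟨hs₁z.le, hzb⟩ hs₁z
  exact hanti.not_gt ((div_neg_of_neg_of_pos hneg₁ (hside s₁ ⟨le_rfl, hs₁.2⟩)).trans
    (div_pos hpos (hside z ⟨hs₁z.le, hzb⟩)))

end IsInscribedNegativeShell

end InscribedShells

section RegularCurves

theorem dot3_eq_dotProduct (a b : R3) : dot3 a b = a ⬝ᵥ b :=
  (vec3_dotProduct a b).symm

theorem cross3_eq_cross (a b : R3) : cross3 a b = a ⨯₃ b :=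
  (cross_apply a b).symm

theorem det3_eq_dotProduct_cross (a b c : R3) : det3 a b c = a ⬝ᵥ b ⨯₃ c := by
  rw [det3, cross3_eq_cross, dot3_eq_dotProduct]

theorem norm3_sq (a : R3) : norm3 a ^ 2 = a ⬝ᵥ a := by
  rw [norm3, dot3_eq_dotProduct, Real.sq_sqrt (dotProduct_self_nonneg a)]

theorem norm3_pos {a : R3} (ha : a ≠ 0) : 0 < norm3 a := by
  rw [norm3, dot3_eq_dotProduct]
  exact Real.sqrt_pos.2 (dotProduct_self_pos ha)

theorem unitNormal_eq (γ : ℝ → R3) (s : ℝ) :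
    unitNormal γ s = (norm3 (deriv γ s))⁻¹ • γ s ⨯₃ deriv γ s := by
  rw [unitNormal, cross3_eq_cross]

theorem dotProduct_unitNormal (γ : ℝ → R3) (s : ℝ) : γ s ⬝ᵥ unitNormal γ s = 0 := by
  rw [unitNormal_eq, dotProduct_smul, dot_self_cross, smul_zero]

theorem deriv_dotProduct_unitNormal (γ : ℝ → R3) (s : ℝ) : deriv γ s ⬝ᵥ unitNormal γ s = 0 := by
  rw [unitNormal_eq, dotProduct_smul, dot_cross_self, smul_zero]

theorem kappa_mul_norm3_pow {γ : ℝ → R3} {s : ℝ} (hs : deriv γ s ≠ 0) :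
    kappa γ s * norm3 (deriv γ s) ^ 3 = γ s ⬝ᵥ deriv γ s ⨯₃ deriv (deriv γ) s := by
  rw [kappa, det3_eq_dotProduct_cross, div_mul_cancel₀ _ (pow_pos (norm3_pos hs) 3).ne']

namespace IsRegularCurve

variable {γ : ℝ → R3} {μ : ℝ}

theorem dotProduct_self (H : IsRegularCurve γ) (s : ℝ) : γ s ⬝ᵥ γ s = 1 := by
  rw [← dot3_eq_dotProduct, H.sphere]

theorem contDiff_deriv (H : IsRegularCurve γ) : ContDiff ℝ (⊤ : ℕ∞) (deriv γ) :=
  (contDiff_infty_iff_deriv.1 H.smooth).2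

theorem continuous_deriv_deriv (H : IsRegularCurve γ) : Continuous (deriv (deriv γ)) :=
  (contDiff_infty_iff_deriv.1 H.contDiff_deriv).2.continuous

theorem hasDerivAt (H : IsRegularCurve γ) (s : ℝ) : HasDerivAt γ (deriv γ s) s :=
  ((contDiff_infty_iff_deriv.1 H.smooth).1 s).hasDerivAt

theorem hasDerivAt_deriv (H : IsRegularCurve γ) (s : ℝ) :
    HasDerivAt (deriv γ) (deriv (deriv γ) s) s :=
  ((contDiff_infty_iff_deriv.1 H.contDiff_deriv).1 s).hasDerivAt

theorem deriv_dotProduct_self (H : IsRegularCurve γ) (s : ℝ) : deriv γ s ⬝ᵥ γ s = 0 :=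
  dotProduct_eq_zero_of_dotProduct_self_eq (H.hasDerivAt s) H.dotProduct_self

theorem unitNormal_dotProduct_self (H : IsRegularCurve γ) (s : ℝ) :
    unitNormal γ s ⬝ᵥ unitNormal γ s = 1 := by
  have hne := (norm3_pos (H.reg s)).ne'
  rw [unitNormal_eq, smul_dotProduct, dotProduct_smul, cross_dot_cross, H.dotProduct_self,
    dotProduct_comm (γ s), H.deriv_dotProduct_self, ← norm3_sq, smul_eq_mul, smul_eq_mul]
  field_simp
  ring

theorem deriv_deriv_dotProduct_unitNormal (H : IsRegularCurve γ) (s : ℝ) :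
    deriv (deriv γ) s ⬝ᵥ unitNormal γ s = kappa γ s * deriv γ s ⬝ᵥ deriv γ s := by
  have hne := (norm3_pos (H.reg s)).ne'
  rw [unitNormal_eq, dotProduct_smul, triple_product_permutation, ← kappa_mul_norm3_pow (H.reg s),
    ← norm3_sq, smul_eq_mul]
  field_simp

theorem differentiableAt_unitNormal (H : IsRegularCurve γ) (s : ℝ) :
    DifferentiableAt ℝ (unitNormal γ) s := by
  have hnorm : DifferentiableAt ℝ (fun t => norm3 (deriv γ t)) s := by
    simp only [norm3, dot3_eq_dotProduct]
    exact (hasDerivAt_dotProduct (H.hasDerivAt_deriv s)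
      (H.hasDerivAt_deriv s)).differentiableAt.sqrt (dotProduct_self_pos (H.reg s)).ne'
  simp only [funext (unitNormal_eq γ)]
  exact (hnorm.fun_inv (norm3_pos (H.reg s)).ne').fun_smul
    (hasDerivAt_cross (H.hasDerivAt s) (H.hasDerivAt_deriv s)).differentiableAt

theorem hasDerivAt_unitNormal (H : IsRegularCurve γ) (s : ℝ) :
    HasDerivAt (unitNormal γ) (-kappa γ s • deriv γ s) s := by
  have hn := (H.differentiableAt_unitNormal s).hasDerivAt
  set n' := deriv (unitNormal γ) s
  have hγ : γ s ⬝ᵥ n' = 0 := by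
    have h := dotProduct_add_dotProduct_eq_zero (H.hasDerivAt s) hn (dotProduct_unitNormal γ)
    rwa [deriv_dotProduct_unitNormal, zero_add] at h
  have hv : deriv γ s ⬝ᵥ n' = -(kappa γ s * deriv γ s ⬝ᵥ deriv γ s) := by
    rw [← H.deriv_deriv_dotProduct_unitNormal]
    exact eq_neg_of_add_eq_zero_right (dotProduct_add_dotProduct_eq_zero (H.hasDerivAt_deriv s) hn
      (deriv_dotProduct_unitNormal γ))
  have hnn : unitNormal γ s ⬝ᵥ n' = 0 := by
    rw [dotProduct_comm]
    exact dotProduct_eq_zero_of_dotProduct_self_eq hn H.unitNormal_dotProduct_self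
  suffices n' + kappa γ s • deriv γ s = 0 by rwa [neg_smul, ← eq_neg_of_add_eq_zero_left this]
  by_contra hne
  have hframe : unitNormal γ s ⬝ᵥ γ s ⨯₃ deriv γ s = 0 := by
    refine dotProduct_cross_eq_zero_of_orthogonal hne ?_ ?_ ?_
    · rw [dotProduct_add, dotProduct_smul, hnn, dotProduct_comm, deriv_dotProduct_unitNormal,
        smul_zero, add_zero]
    · rw [dotProduct_add, dotProduct_smul, hγ, dotProduct_comm, H.deriv_dotProduct_self,
        smul_zero, add_zero]
    · rw [dotProduct_add, dotProduct_smul, hv, smul_eq_mul, neg_add_cancel]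
  have hunit := H.unitNormal_dotProduct_self s
  nth_rw 2 [unitNormal_eq] at hunit
  rw [dotProduct_smul, hframe, smul_zero] at hunit
  exact zero_ne_one hunit

theorem isTangentCircleFamily (H : IsRegularCurve γ) (hμ : 0 < μ) (hκ : ∀ s, μ < kappa γ s) :
    IsTangentCircleFamily (μ / √(1 + μ ^ 2)) γ (deriv γ) (deriv (deriv γ)) (tangentCenter μ γ)
      (fun s => (kappa γ s - μ) / √(1 + μ ^ 2)) where
  height_pos := by positivity
  hasDerivAt := H.hasDerivAt
  hasDerivAt_velocity := H.hasDerivAt_deriv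
  continuous_acceleration := H.continuous_deriv_deriv
  hasDerivAt_center s := by
    have hd := (((H.hasDerivAt s).const_smul μ).add (H.hasDerivAt_unitNormal s)).const_smul
      (√(1 + μ ^ 2))⁻¹
    refine hd.congr_deriv ?_
    rw [← add_smul, smul_smul]
    congr 1
    ring
  lam_pos s := div_pos (sub_pos.2 (hκ s)) (by positivity)
  sphere := H.dotProduct_self
  sphere_center s := by
    have hne : √(1 + μ ^ 2) ≠ 0 := by positivity
    have hsq : √(1 + μ ^ 2) ^ 2 = 1 + μ ^ 2 := Real.sq_sqrt (by positivity)
    simp only [tangentCenter, smul_dotProduct, dotProduct_smul, add_dotProduct, dotProduct_add,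
      H.dotProduct_self, dotProduct_unitNormal, H.unitNormal_dotProduct_self, smul_eq_mul,
      dotProduct_comm _ (γ s)]
    field_simp
    linarith
  height s := by
    simp only [tangentCenter, dotProduct_smul, dotProduct_add, H.dotProduct_self,
      dotProduct_unitNormal, smul_eq_mul]
    ring
  tangent s := by
    simp only [tangentCenter, dotProduct_smul, dotProduct_add, H.deriv_dotProduct_self,
      deriv_dotProduct_unitNormal, smul_zero, add_zero]
  velocity_ne_zero := H.reg

end IsRegularCurve

end RegularCurves

section Rotations

variable {μ θ : ℝ} {p x o : R3}

theorem rot3_dotProduct (p x o : R3) (θ : ℝ) :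
    rot3 p θ x ⬝ᵥ o = Real.cos θ * (x ⬝ᵥ o - p ⬝ᵥ x * p ⬝ᵥ o) + Real.sin θ * p ⨯₃ x ⬝ᵥ o +
      p ⬝ᵥ x * p ⬝ᵥ o := by
  simp only [rot3, cross3_eq_cross, dot3_eq_dotProduct, add_dotProduct, smul_dotProduct,
    smul_eq_mul]
  ring

theorem dotProduct_cross_rot3 (p x : R3) (θ : ℝ) :
    x ⬝ᵥ p ⨯₃ rot3 p θ x = Real.sin θ * ((p ⬝ᵥ x) ^ 2 - p ⬝ᵥ p * x ⬝ᵥ x) := by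
  rw [rot3, cross3_eq_cross, map_add, map_add, map_smul, map_smul, map_smul, cross_self,
    smul_zero, add_zero, cross_cross_eq_smul_sub_smul', dotProduct_add, dotProduct_smul,
    dot_cross_self, smul_zero, zero_add, dotProduct_smul, dotProduct_sub, dotProduct_smul,
    dotProduct_smul, dotProduct_comm x p]
  simp only [smul_eq_mul]
  ring

theorem rot3_dotProduct_self (hp : p ⬝ᵥ p = 1) (x : R3) (θ : ℝ) :
    rot3 p θ x ⬝ᵥ rot3 p θ x = x ⬝ᵥ x := by
  have haxis : p ⬝ᵥ rot3 p θ x = p ⬝ᵥ x := by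
    rw [dotProduct_comm, rot3_dotProduct, hp, dotProduct_comm (_ ⨯₃ _), dot_self_cross,
      dotProduct_comm x]
    ring
  have hx : x ⬝ᵥ rot3 p θ x = Real.cos θ * (x ⬝ᵥ x - (p ⬝ᵥ x) ^ 2) + (p ⬝ᵥ x) ^ 2 := by
    rw [dotProduct_comm, rot3_dotProduct, dotProduct_comm (_ ⨯₃ _), dot_cross_self]
    ring
  have hcross : p ⨯₃ x ⬝ᵥ rot3 p θ x = Real.sin θ * (x ⬝ᵥ x - (p ⬝ᵥ x) ^ 2) := by
    rw [dotProduct_comm, rot3_dotProduct, dotProduct_comm _ x, dot_cross_self, dot_self_cross,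
      cross_dot_cross, hp, dotProduct_comm x p]
    ring
  rw [rot3_dotProduct, haxis, hx, hcross]
  linear_combination (x ⬝ᵥ x - (p ⬝ᵥ x) ^ 2) * Real.cos_sq_add_sin_sq θ

theorem eq_of_linear_eq_of_sq_add_sq_eq_one {A B k x y x₁ y₁ x₂ y₂ : ℝ} (hA : A ≠ 0)
    (h : A * x + B * y = k) (h₁ : A * x₁ + B * y₁ = k) (h₂ : A * x₂ + B * y₂ = k)
    (hc : x ^ 2 + y ^ 2 = 1) (hc₁ : x₁ ^ 2 + y₁ ^ 2 = 1) (hc₂ : x₂ ^ 2 + y₂ ^ 2 = 1)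
    (hne : y₁ ≠ y₂) : x = x₁ ∧ y = y₁ ∨ x = x₂ ∧ y = y₂ := by
  have hchord {x' y' : ℝ} (h' : A * x' + B * y' = k) (hc' : x' ^ 2 + y' ^ 2 = 1) (hy : y ≠ y') :
      A * (y + y') = B * (x + x') :=
    mul_left_cancel₀ (sub_ne_zero.2 hy) (by linear_combination A * (hc - hc') - (x + x') * (h - h'))
  have hfst {x' y' : ℝ} (h' : A * x' + B * y' = k) (hy : y = y') : x = x' :=
    mul_left_cancel₀ hA (by linear_combination h - h' - B * hy)
  by_cases hy₁ : y = y₁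
  · exact Or.inl ⟨hfst h₁ hy₁, hy₁⟩
  by_cases hy₂ : y = y₂
  · exact Or.inr ⟨hfst h₂ hy₂, hy₂⟩
  have hzero : (A ^ 2 + B ^ 2) * (y₁ - y₂) = 0 := by
    linear_combination A * (hchord h₁ hc₁ hy₁ - hchord h₂ hc₂ hy₂) + B * (h₁ - h₂)
  exact absurd (sub_eq_zero.1 ((mul_eq_zero.1 hzero).resolve_left (by positivity))) hne

theorem exists_cos_sin_eq_of_pi_lt {A B k : ℝ} (hθ : θ ∈ Ioo Real.pi (2 * Real.pi))
    (h0 : k ≤ A) (hpi : -A < k) (hend : k ≤ A * Real.cos θ + B * Real.sin θ) :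
    ∃ τ₁ ∈ Icc 0 θ, ∃ τ₂ ∈ Icc 0 θ, A * Real.cos τ₁ + B * Real.sin τ₁ = k ∧
      A * Real.cos τ₂ + B * Real.sin τ₂ = k ∧ 0 ≤ Real.sin τ₁ ∧ Real.sin τ₂ < 0 := by
  have hcont : Continuous fun τ => A * Real.cos τ + B * Real.sin τ := by fun_prop
  have hvalpi : A * Real.cos Real.pi + B * Real.sin Real.pi = -A := by simp
  obtain ⟨τ₁, ⟨h₁0, h₁π⟩, h₁⟩ := intermediate_value_Icc' Real.pi_pos.le hcont.continuousOn
    ⟨hvalpi.trans_le hpi.le, by simpa using h0⟩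
  obtain ⟨τ₂, ⟨h₂π, h₂θ⟩, h₂⟩ := intermediate_value_Icc hθ.1.le hcont.continuousOn
    ⟨hvalpi.trans_le hpi.le, hend⟩
  have h₂π' : Real.pi < τ₂ := h₂π.lt_of_ne fun heq => hpi.ne (hvalpi.symm.trans (heq ▸ h₂))
  have hsin : 0 < Real.sin (τ₂ - Real.pi) :=
    Real.sin_pos_of_pos_of_lt_pi (sub_pos.2 h₂π') (by linarith [hθ.2])
  rw [Real.sin_sub_pi, neg_pos] at hsin
  exact ⟨τ₁, ⟨h₁0, h₁π.trans hθ.1.le⟩, τ₂, ⟨Real.pi_pos.le.trans h₂π, h₂θ⟩, h₁, h₂,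
    Real.sin_nonneg_of_nonneg_of_le_pi h₁0 h₁π, hsin⟩

theorem mem_muCircle : x ∈ muCircle μ o ↔ x ⬝ᵥ x = 1 ∧ x ⬝ᵥ o = μ / √(1 + μ ^ 2) := by
  rw [muCircle, Set.mem_ofPred_eq, dot3_eq_dotProduct, dot3_eq_dotProduct]

theorem div_sqrt_one_add_sq_lt_one (μ : ℝ) : μ / √(1 + μ ^ 2) < 1 := by
  rw [div_lt_one (by positivity)]
  exact Real.lt_sqrt_of_sq_lt (by linarith)

theorem rot3_ne_rot3_of_sin_ne (hμ : 0 < μ) (hp : p ⬝ᵥ p = 1) (hx : x ∈ muCircle μ p) {τ₁ τ₂ : ℝ}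
    (hsin : Real.sin τ₁ ≠ Real.sin τ₂) : rot3 p τ₁ x ≠ rot3 p τ₂ x := fun heq => by
  obtain ⟨hx1, hxp⟩ := mem_muCircle.1 hx
  have htriple := dotProduct_cross_rot3 p x τ₁
  rw [heq, dotProduct_cross_rot3, hp, hx1, dotProduct_comm, hxp] at htriple
  have hpos : 0 < μ / √(1 + μ ^ 2) := by positivity
  exact hsin.symm (mul_right_cancel₀ (by nlinarith [div_sqrt_one_add_sq_lt_one μ]) htriple)

theorem exists_arc_inter_muCircle_eq_pair (hμ : 0 < μ) (hp : p ⬝ᵥ p = 1) (hx : x ∈ muCircle μ p)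
    (hpo : p ⬝ᵥ o < 1) (hxo : μ / √(1 + μ ^ 2) ≤ x ⬝ᵥ o)
    (hend : μ / √(1 + μ ^ 2) ≤ rot3 p θ x ⬝ᵥ o) (hθ : θ ∈ Ioo Real.pi (2 * Real.pi)) :
    ∃ Y Z : R3, Y ≠ Z ∧ ((fun τ => rot3 p τ x) '' Icc 0 θ) ∩ muCircle μ o = {Y, Z} := by
  obtain ⟨hx1, hxp⟩ := mem_muCircle.1 hx
  have hh : 0 < μ / √(1 + μ ^ 2) := by positivity
  set h := μ / √(1 + μ ^ 2)
  set A := x ⬝ᵥ o - h * p ⬝ᵥ o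
  set B := p ⨯₃ x ⬝ᵥ o
  have hA : 0 < A := by nlinarith
  have hval (τ : ℝ) :
      rot3 p τ x ⬝ᵥ o = A * Real.cos τ + B * Real.sin τ + h * p ⬝ᵥ o := by
    rw [rot3_dotProduct, dotProduct_comm p x, hxp]
    ring
  have hmem (τ : ℝ) : rot3 p τ x ∈ muCircle μ o ↔
      A * Real.cos τ + B * Real.sin τ = h - h * p ⬝ᵥ o := by
    rw [mem_muCircle, rot3_dotProduct_self hp, hx1, eq_self, true_and, hval, eq_sub_iff_add_eq]
  obtain ⟨τ₁, hτ₁, τ₂, hτ₂, h₁, h₂, hsin₁, hsin₂⟩ := exists_cos_sin_eq_of_pi_lt (A := A) (B := B)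
    (k := h - h * p ⬝ᵥ o) hθ (by linarith) (by nlinarith) (by linarith [hval θ])
  have hsin : Real.sin τ₁ ≠ Real.sin τ₂ := (hsin₂.trans_le hsin₁).ne'
  refine ⟨rot3 p τ₁ x, rot3 p τ₂ x, rot3_ne_rot3_of_sin_ne hμ hp hx hsin, Subset.antisymm ?_ ?_⟩
  · rintro _ ⟨⟨τ, -, rfl⟩, hτ⟩
    rcases eq_of_linear_eq_of_sq_add_sq_eq_one hA.ne' ((hmem τ).1 hτ) h₁ h₂
      (Real.cos_sq_add_sin_sq τ) (Real.cos_sq_add_sin_sq τ₁) (Real.cos_sq_add_sin_sq τ₂) hsin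
      with ⟨hcos, hsin⟩ | ⟨hcos, hsin⟩ <;> simp only [rot3, hcos, hsin, mem_insert_iff,
        mem_singleton_iff, true_or, or_true]
  · rintro _ (rfl | rfl)
    · exact ⟨⟨τ₁, hτ₁, rfl⟩, (hmem τ₁).2 h₁⟩
    · exact ⟨⟨τ₂, hτ₂, rfl⟩, (hmem τ₂).2 h₂⟩

theorem pi_lt_of_sin_neg (hθ : 0 ≤ θ) (hsin : Real.sin θ < 0) : Real.pi < θ := by
  by_contra! hle
  exact hsin.not_ge (Real.sin_nonneg_of_nonneg_of_le_pi hθ hle)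

end Rotations

section Shells

variable {μ a b c d s t x : ℝ} {γ : ℝ → R3} {o : R3}

theorem tangentCenter_eq (μ : ℝ) (γ : ℝ → R3) (s : ℝ) : tangentCenter μ γ s =
    (μ / √(1 + μ ^ 2)) • γ s + ((√(1 + μ ^ 2))⁻¹ * (norm3 (deriv γ s))⁻¹) • γ s ⨯₃ deriv γ s := by
  rw [tangentCenter, unitNormal_eq, smul_add, smul_smul, smul_smul, div_eq_inv_mul]

theorem le_dotProduct_of_mem_closure_muDisk {y : R3} (hy : y ∈ closure (muDisk μ o)) :
    μ / √(1 + μ ^ 2) ≤ y ⬝ᵥ o := by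
  have hclosed : IsClosed {z : R3 | μ / √(1 + μ ^ 2) ≤ z ⬝ᵥ o} :=
    isClosed_le continuous_const (continuous_id.dotProduct continuous_const)
  refine closure_minimal (fun z hz => ?_) hclosed hy
  rw [Set.mem_ofPred_eq, ← dot3_eq_dotProduct]
  exact hz.2.le

namespace IsRegularCurve

theorem eq_tangentCenter_of_touches (H : IsRegularCurve γ) (hμ : 0 < μ) (hκ : ∀ s, μ < kappa γ s)
    (ho : o ⬝ᵥ o = 1) (hin : γ '' Icc a b ⊆ closure (muDisk μ o)) (hs : s ∈ Ioo a b)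
    (hmem : γ s ∈ muCircle μ o) : o = tangentCenter μ γ s :=
  (H.isTangentCircleFamily hμ hκ).eq_center_of_touches ho (mem_muCircle.1 hmem).2 <| by
    filter_upwards [Icc_mem_nhds hs.1 hs.2] with x hx
    exact le_dotProduct_of_mem_closure_muDisk (hin (mem_image_of_mem γ hx))

theorem isInscribedNegativeShell (H : IsRegularCurve γ) (hμ : 0 < μ) (hκ : ∀ s, μ < kappa γ s)
    (hshell : IsNegativeShell γ a b) (ho : o ⬝ᵥ o = 1)
    (hin : γ '' Icc a b ⊆ closure (muDisk μ o)) (hac : a < c) (hcd : c < d) (hdb : d < b)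
    (hmeet : muCircle μ o ∩ γ '' Icc a b = {γ d, γ c}) :
    IsInscribedNegativeShell (μ / √(1 + μ ^ 2)) γ (deriv γ) (deriv (deriv γ)) (tangentCenter μ γ)
      (fun s => (kappa γ s - μ) / √(1 + μ ^ 2))
      (fun s => (√(1 + μ ^ 2))⁻¹ * (norm3 (deriv γ s))⁻¹) a c d b := by
  obtain ⟨⟨-, hinj, hclosed, -⟩, hneg⟩ := hshell
  have had : a < d := hac.trans hcd
  have hcb : c < b := hcd.trans hdb
  have hd : γ d ∈ muCircle μ o := inter_subset_left (hmeet.ge (mem_insert _ _))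
  have hc : γ c ∈ muCircle μ o := inter_subset_left (hmeet.ge (mem_insert_of_mem _ rfl))
  have hod := H.eq_tangentCenter_of_touches hμ hκ ho hin ⟨had, hdb⟩ hd
  have hoc := H.eq_tangentCenter_of_touches hμ hκ ho hin ⟨hac, hcb⟩ hc
  have hlt {s : ℝ} (hs : s ∈ Ico a b) (hsd : s ≠ d) (hsc : s ≠ c) :
      μ / √(1 + μ ^ 2) < γ s ⬝ᵥ tangentCenter μ γ d := by
    have hmem := mem_image_of_mem γ (Ico_subset_Icc_self hs)
    rw [← hod]
    refine (le_dotProduct_of_mem_closure_muDisk (hin hmem)).lt_of_ne fun heq => ?_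
    rcases hmeet.le ⟨mem_muCircle.2 ⟨H.dotProduct_self s, heq.symm⟩, hmem⟩ with h | h
    · exact hsd (hinj hs ⟨had.le, hdb⟩ h)
    · exact hsc (hinj hs ⟨hac.le, hcb⟩ h)
  have hleft : ∀ s ∈ Ico a c, μ / √(1 + μ ^ 2) < γ s ⬝ᵥ tangentCenter μ γ d := fun s hs =>
    hlt ⟨hs.1, hs.2.trans hcb⟩ (hs.2.trans hcd).ne hs.2.ne
  refine ⟨H.isTangentCircleFamily hμ hκ, fun s => ?_, tangentCenter_eq μ γ, hac, hcd, hdb, hinj,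
    hclosed, det3_eq_dotProduct_cross _ _ _ ▸ hneg, hoc.symm.trans hod, hleft, fun s hs => ?_⟩
  · have hspeed := norm3_pos (H.reg s)
    positivity
  · rcases hs.2.eq_or_lt with rfl | hsb
    · exact hclosed ▸ hleft a ⟨le_rfl, hac⟩
    · exact hlt ⟨(had.trans hs.1).le, hsb⟩ hs.1.ne' (hcd.trans hs.1).ne'

end IsRegularCurve

namespace IsInscribedNegativeShell

variable {h θ : ℝ} {v w p : ℝ → R3} {lam k : ℝ → ℝ}

theorem lt_of_height_eq (H : IsInscribedNegativeShell h γ v w p lam k a c d b) (ht : d ≤ t)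
    (hx : x ≤ b) (hxt : x ≠ t) (hheight : γ x ⬝ᵥ p t = h) : x < t :=
  hxt.lt_of_le (not_lt.1 fun htx => (H.isNestedOn_right ht htx hx).ne' hheight)

theorem sin_neg_of_rot3_eq (H : IsInscribedNegativeShell h γ v w p lam k a c d b) (hh : h < 1)
    (hx : d ≤ x) (hxt : x < t) (ht : t ≤ b) (hheight : γ x ⬝ᵥ p t = h)
    (hrot : rot3 (p t) θ (γ x) = γ t) : Real.sin θ < 0 := by
  have htriple := dotProduct_cross_rot3 (p t) (γ x) θ
  rw [hrot, H.dotProduct_center_cross, dotProduct_comm (p t), hheight, H.sphere_center,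
    H.sphere, one_mul] at htriple
  have hpos := mul_pos (H.scale_pos t) (H.dotProduct_velocity_pos hx hxt ht hheight)
  exact neg_of_mul_pos_left (htriple ▸ hpos) (by nlinarith [H.height_pos])

end IsInscribedNegativeShell

end Shells

theorem stmt10_general (μ : ℝ) (γ1 : ℝ → R3) (a1 b1 c1 d1 : ℝ) (o : R3)
    (hμ : 0 < μ) (hreg : IsRegularCurve γ1) (hκ : ∀ s, μ < kappa γ1 s)
    (hshell : IsNegativeShell γ1 a1 b1) (ho : dot3 o o = 1)
    (hin : γ1 '' Icc a1 b1 ⊆ closure (muDisk μ o)) (horder : a1 < c1 ∧ c1 < d1 ∧ d1 < b1)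
    (hmeet : muCircle μ o ∩ γ1 '' Icc a1 b1 = {γ1 d1, γ1 c1})
    (t x : ℝ) (ht : t ∈ Icc d1 b1) (hx : x ∈ Icc d1 b1) (hxt : x ≠ t)
    (hX : γ1 x ∈ muCircle μ (tangentCenter μ γ1 t)) :
    x < t ∧ ∀ θx ∈ Ioo (0 : ℝ) (2 * Real.pi), rot3 (tangentCenter μ γ1 t) θx (γ1 x) = γ1 t →
      ∃ Y Z : R3, Y ≠ Z ∧
        ((fun θ => rot3 (tangentCenter μ γ1 t) θ (γ1 x)) '' Icc 0 θx) ∩ muCircle μ o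
          = {Y, Z} := by
  obtain ⟨hac, hcd, hdb⟩ := horder
  rw [dot3_eq_dotProduct] at ho
  have H := hreg.isInscribedNegativeShell hμ hκ hshell ho hin hac hcd hdb hmeet
  have hheight := (mem_muCircle.1 hX).2
  have hlt : x < t := H.lt_of_height_eq ht.1 hx.2 hxt hheight
  refine ⟨hlt, fun θ hθ hrot => ?_⟩
  have hmem {s : ℝ} (hs : s ∈ Icc d1 b1) : μ / √(1 + μ ^ 2) ≤ γ1 s ⬝ᵥ o :=
    le_dotProduct_of_mem_closure_muDisk
      (hin (mem_image_of_mem γ1 ⟨(hac.trans hcd).le.trans hs.1, hs.2⟩))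
  have hsin : Real.sin θ < 0 :=
    H.sin_neg_of_rot3_eq (div_sqrt_one_add_sq_lt_one μ) hx.1 hlt ht.2 hheight hrot
  have hod : o = tangentCenter μ γ1 d1 := hreg.eq_tangentCenter_of_touches hμ hκ ho hin
    ⟨hac.trans hcd, hdb⟩ (inter_subset_left (hmeet.ge (mem_insert _ _)))
  have hne : tangentCenter μ γ1 t ≠ o := fun heq =>
    (H.inside_right t ⟨hx.1.trans_lt hlt, ht.2⟩).ne' (by rw [← hod, ← heq, H.height])
  exact exists_arc_inter_muCircle_eq_pair hμ (H.sphere_center t) hX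
    (dotProduct_lt_one (H.sphere_center t) ho hne) (hmem hx) (hrot ▸ hmem ht)
    ⟨pi_lt_of_sin_neg hθ.1.le hsin, hθ.2⟩

theorem stmt10 (μ : ℝ) (γ1 : ℝ → R3) (l a1 b1 c1 d1 : ℝ) (o : R3)
    (hμ : 0 < μ) (hreg : IsRegularCurve γ1) (hper : HasPeriod γ1 l)
    (hκ : ∀ s, μ < kappa γ1 s) (hint : b1 - a1 < l)
    (hshell : IsNegativeShell γ1 a1 b1)
    (ho : dot3 o o = 1)
    (hin : γ1 '' Set.Icc a1 b1 ⊆ closure (muDisk μ o))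
    (horder : a1 < c1 ∧ c1 < d1 ∧ d1 < b1)
    (hPQ : γ1 d1 ≠ γ1 c1)
    (hmeet : muCircle μ o ∩ γ1 '' Set.Icc a1 b1 = {γ1 d1, γ1 c1})
    (t x : ℝ) (ht : t ∈ Set.Icc d1 b1) (hx : x ∈ Set.Icc d1 b1) (hxt : x ≠ t)
    (hX : γ1 x ∈ muCircle μ (tangentCenter μ γ1 t)) :
    (t < x → ∀ θx ∈ Set.Ioo (0 : ℝ) (2 * Real.pi),
      rot3 (tangentCenter μ γ1 t) θx (γ1 t) = γ1 x →
      ∃ Y Z : R3, Y ≠ Z ∧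
        ((fun θ => rot3 (tangentCenter μ γ1 t) θ (γ1 t)) '' Set.Icc 0 θx) ∩ muCircle μ o
          = {Y, Z}) ∧
    (x < t → ∀ θx ∈ Set.Ioo (0 : ℝ) (2 * Real.pi),
      rot3 (tangentCenter μ γ1 t) θx (γ1 x) = γ1 t →
      ∃ Y Z : R3, Y ≠ Z ∧
        ((fun θ => rot3 (tangentCenter μ γ1 t) θ (γ1 x)) '' Set.Icc 0 θx) ∩ muCircle μ o
          = {Y, Z}) := by
  obtain ⟨hlt, harc⟩ := stmt10_general μ γ1 a1 b1 c1 d1 o hμ hreg hκ hshell ho hin horder hmeet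
    t x ht hx hxt hX
  exact ⟨fun htx => absurd htx hlt.not_gt, fun _ => harc⟩
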